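/- arXiv:1301.6509 — 2 statements merged into one kernel-verified Lean document; each statement's English description precedes it below -/
import Mathlib

section
/- Let σ₁,…,σ_k be non-crossing RGFs and let p be a permutation of {1,…,k}. Then σ₁[σ₂]⋯[σ_k] ≃cc σ_{p(1)}[σ_{p(2)}]⋯[σ_{p(k)}]. -/
/-- A restricted growth function (canonical sequential form of a set partition):
a word over the positive integers whose first letter is 1 and where each letter
is at most one more than the maximum of the preceding letters. -/
def IsRGF (w : List ℕ) : Prop :=
  (∀ x ∈ w, 1 ≤ x) ∧
  (w ≠ [] → w.getD 0 0 = 1) ∧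
  ∀ i, i + 1 < w.length → w.getD (i + 1) 0 ≤ ((w.take (i + 1)).foldr max 0) + 1

/-- Two words of the same length are order-isomorphic: corresponding entries
compare the same way (this preserves equalities as well). -/
def WordOrdIso (s t : List ℕ) : Prop :=
  s.length = t.length ∧
  ∀ i j, i < s.length → j < s.length →
    (s.getD i 0 < s.getD j 0 ↔ t.getD i 0 < t.getD j 0)

/-- `w` contains the pattern `p`: a subsequence of `w` is order-isomorphic to `p`. -/
def PatContains (w p : List ℕ) : Prop := ∃ s : List ℕ, s.Sublist w ∧ WordOrdIso s p

/-- `w` avoids the pattern `p`. -/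
def PatAvoids (w p : List ℕ) : Prop := ¬ PatContains w p

/-- `pCount n T` = number of RGFs of length `n` avoiding every pattern in `T`. -/
noncomputable def pCount (n : ℕ) (T : Set (List ℕ)) : ℕ :=
  {w : List ℕ | IsRGF w ∧ w.length = n ∧ ∀ p ∈ T, PatAvoids w p}.ncard

/-- A word is non-crossing if it avoids the pattern 1212. -/
def NonCrossing (w : List ℕ) : Prop := PatAvoids w [1,2,1,2]

/-- The number of distinct letters of an RGF equals its maximum letter. -/
def nLetters (w : List ℕ) : ℕ := w.foldr max 0

/-- `rgfComp a b` is the pattern `a[b]`: `a` followed by `b` shifted up by the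
number of distinct letters of `a`. -/
def rgfComp (a b : List ℕ) : List ℕ := a ++ b.map (· + nLetters a)

/-- A connected RGF: nonempty and not expressible as `σ[τ]` with `σ, τ` nonempty RGFs. -/
def Connected (w : List ℕ) : Prop :=
  w ≠ [] ∧ ¬ ∃ a b : List ℕ, IsRGF a ∧ IsRGF b ∧ a ≠ [] ∧ b ≠ [] ∧ w = rgfComp a b

/-- `w` decomposes as `σ₁[σ₂]⋯[σ_p]` with each `σ_i` a connected RGF. -/
def HasComponents (w : List ℕ) (p : ℕ) : Prop :=
  ∃ l : List (List ℕ), l.length = p ∧ (∀ c ∈ l, IsRGF c ∧ Connected c) ∧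
    w = l.foldr rgfComp []

/-- Number of non-crossing RGFs of length `n` with `p` components avoiding `σ`. -/
noncomputable def ncCount (n p : ℕ) (σ : List ℕ) : ℕ :=
  {w : List ℕ | IsRGF w ∧ NonCrossing w ∧ w.length = n ∧ PatAvoids w σ ∧
    HasComponents w p}.ncard

/-- cc-equivalence of patterns. -/
def ccEquiv (σ τ : List ℕ) : Prop := ∀ n p : ℕ, ncCount n p σ = ncCount n p τ

/-- Number of non-crossing RGFs of length `n` avoiding `σ`. -/
noncomputable def ncAvoidCount (n : ℕ) (σ : List ℕ) : ℕ :=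
  {w : List ℕ | IsRGF w ∧ NonCrossing w ∧ w.length = n ∧ PatAvoids w σ}.ncard

/-- Auxiliary: builds `1[σ₁]1[σ₂]⋯1[σ_k]1` with accumulated letter shift `s`. -/
def onePatAux : ℕ → List (List ℕ) → List ℕ
  | _, [] => [1]
  | s, c :: rest => 1 :: (c.map (· + s) ++ onePatAux (s + nLetters c) rest)

/-- The pattern `1[σ₁]1[σ₂]⋯1[σ_k]1`. -/
def onePat (l : List (List ℕ)) : List ℕ := onePatAux 1 l

/-- The pattern `1[σ]1[τ]`. -/
def pat2 (σ τ : List ℕ) : List ℕ :=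
  1 :: (σ.map (· + 1) ++ 1 :: τ.map (· + (1 + nLetters σ)))


/-! ### Basic facts on words -/

theorem nL_append (a b : List ℕ) : nLetters (a ++ b) = max (nLetters a) (nLetters b) := by
  induction a with
  | nil => simp [nLetters]
  | cons x a ih =>
    have h : ∀ y (c : List ℕ), nLetters (y :: c) = max y (nLetters c) := fun _ _ => rfl
    rw [List.cons_append, h, h, ih, max_assoc]

theorem nL_cons (x : ℕ) (a : List ℕ) : nLetters (x :: a) = max x (nLetters a) := rfl

theorem nL_nil : nLetters [] = 0 := rfl

theorem le_nL {a : List ℕ} {x : ℕ} (h : x ∈ a) : x ≤ nLetters a := by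
  induction a with
  | nil => simp at h
  | cons y a ih =>
    rw [nL_cons]
    rcases List.mem_cons.1 h with rfl | h
    · exact le_max_left _ _
    · exact (ih h).trans (le_max_right _ _)

theorem nL_mem {a : List ℕ} (h : a ≠ []) : nLetters a ∈ a := by
  induction a with
  | nil => simp at h
  | cons y a ih =>
    rw [nL_cons]
    rcases le_total y (nLetters a) with hy | hy
    · rw [max_eq_right hy]
      by_cases ha : a = []
      · subst ha
        have : y = 0 := by simpa [nL_nil] using hy
        simp [nL_nil, this]
      · exact List.mem_cons_of_mem _ (ih ha)
    · rw [max_eq_left hy]; simp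

theorem nL_map (a : List ℕ) (K : ℕ) (h : a ≠ []) :
    nLetters (a.map (· + K)) = nLetters a + K := by
  apply le_antisymm
  · have := nL_mem (a := a.map (· + K)) (by simpa using h)
    obtain ⟨x, hx, hx'⟩ := List.mem_map.1 this
    rw [← hx']
    have := le_nL hx
    simpa using this
  · exact le_nL (List.mem_map.2 ⟨_, nL_mem h, rfl⟩)

theorem nL_comp (a b : List ℕ) : nLetters (rgfComp a b) = nLetters a + nLetters b := by
  unfold rgfComp
  rw [nL_append]
  by_cases h : b = []
  · subst h; simp [nL_nil]
  · rw [nL_map _ _ h]; omega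

theorem comp_nil (a : List ℕ) : rgfComp a [] = a := by simp [rgfComp]

theorem nil_comp (a : List ℕ) : rgfComp [] a = a := by simp [rgfComp, nL_nil]

theorem comp_assoc (a b c : List ℕ) :
    rgfComp (rgfComp a b) c = rgfComp a (rgfComp b c) := by
  have := nL_comp a b
  simp only [rgfComp] at *
  rw [this]
  simp [Function.comp_def]
  intro x _
  omega

/-- The word `σ₁[σ₂]⋯[σ_k]`. -/
def wfold (L : List (List ℕ)) : List ℕ := L.foldr rgfComp []

theorem wfold_nil : wfold [] = [] := rfl

theorem wfold_cons (a : List ℕ) (L : List (List ℕ)) :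
    wfold (a :: L) = rgfComp a (wfold L) := rfl

theorem wfold_append (L M : List (List ℕ)) :
    wfold (L ++ M) = rgfComp (wfold L) (wfold M) := by
  induction L with
  | nil => simp [wfold_nil, nil_comp]
  | cons a L ih => rw [List.cons_append, wfold_cons, wfold_cons, ih, comp_assoc]

/-- Reformulation of the restricted growth condition. -/
theorem isRGF_iff (w : List ℕ) :
    IsRGF w ↔ (∀ x ∈ w, 1 ≤ x) ∧ ∀ u x v, w = u ++ x :: v → x ≤ nLetters u + 1 := by
  unfold IsRGF
  constructor
  · rintro ⟨h1, h2, h3⟩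
    refine ⟨h1, ?_⟩
    rintro u x v rfl
    rcases List.eq_nil_or_concat u with rfl | ⟨u', y, rfl⟩
    · have := h2 (by simp)
      simp at this
      omega
    · have := h3 u'.length (by simp)
      have ht : u'.take (u'.length + 1) = u' := List.take_of_length_le (by omega)
      simpa [nLetters, ht, List.take_append, List.getD_append_right, List.getD_eq_getElem?_getD] using this
  · rintro ⟨h1, h2⟩
    refine ⟨h1, ?_, ?_⟩
    · intro hw
      obtain ⟨x, v, rfl⟩ := List.exists_cons_of_ne_nil hw
      have a := h2 [] x v rfl
      have b := h1 x (by simp)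
      simp [nL_nil] at a ⊢
      omega
    · intro i hi
      have := h2 (w.take (i + 1)) w[i+1] (w.drop (i + 2)) (by simp)
      rw [List.getD_eq_getElem _ _ hi]
      exact this

theorem isRGF_nil : IsRGF [] := by
  rw [isRGF_iff]; simp

theorem IsRGF.pos {w : List ℕ} (h : IsRGF w) {x : ℕ} (hx : x ∈ w) : 1 ≤ x := h.1 x hx

theorem IsRGF.initial_part {u v : List ℕ} (h : IsRGF (u ++ v)) : IsRGF u := by
  rw [isRGF_iff] at *
  refine ⟨fun x hx => h.1 x (by simp [hx]), ?_⟩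
  rintro a x b rfl
  exact h.2 a x (b ++ v) (by simp)

/-- All values up to the maximum occur in a restricted growth function. -/
theorem IsRGF.mem_of_le {w : List ℕ} (h : IsRGF w) {x : ℕ} (h1 : 1 ≤ x) (h2 : x ≤ nLetters w) :
    x ∈ w := by
  induction w using List.reverseRecOn with
  | nil => simp [nL_nil] at h2; omega
  | append_singleton w y ih =>
    have hw := h.initial_part
    have hy := ((isRGF_iff _).1 h).2 w y [] rfl
    rw [nL_append, nL_cons, nL_nil] at h2
    by_cases hx : x ≤ nLetters w
    · exact List.mem_append_left _ (ih hw hx)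
    · have : x = y := by omega
      simp [this]

/-- A suffix of an RGF all of whose letters exceed those before it is a shifted RGF. -/
theorem IsRGF.suffix {u v : List ℕ} (h : IsRGF (u ++ v)) (huv : ∀ x ∈ u, ∀ y ∈ v, x < y) :
    ∃ b, IsRGF b ∧ u ++ v = rgfComp u b ∧ v = b.map (· + nLetters u) := by
  have hv : ∀ y ∈ v, nLetters u < y := by
    intro y hy
    by_cases hu : u = []
    · subst hu; exact h.pos (by simpa using hy)
    · exact huv _ (nL_mem hu) y hy
  have key : (v.map (· - nLetters u)).map (· + nLetters u) = v := by
    rw [List.map_map]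
    conv_rhs => rw [← List.map_id v]
    apply List.map_congr_left
    intro y hy
    have := hv y hy
    simp; omega
  refine ⟨v.map (· - nLetters u), ?_, ?_, key.symm⟩
  · rw [isRGF_iff] at *
    constructor
    · intro x hx
      obtain ⟨y, hy, rfl⟩ := List.mem_map.1 hx
      have := hv y hy
      omega
    · intro a x b hab
      have h2 : v = (a.map (· + nLetters u)) ++ (x + nLetters u) :: b.map (· + nLetters u) := by
        rw [← key, hab]; simp
      have h3 := h.2 (u ++ a.map (· + nLetters u)) (x + nLetters u) (b.map (· + nLetters u))
        (by rw [h2]; simp)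
      rw [nL_append] at h3
      by_cases ha : a = []
      · subst ha; simp [nL_nil] at h3 ⊢; omega
      · rw [nL_map _ _ ha] at h3; omega
  · unfold rgfComp; rw [key]

theorem IsRGF.comp {a b : List ℕ} (ha : IsRGF a) (hb : IsRGF b) : IsRGF (rgfComp a b) := by
  unfold rgfComp
  rw [isRGF_iff] at *
  constructor
  · intro x hx
    rcases List.mem_append.1 hx with hx | hx
    · exact ha.1 x hx
    · obtain ⟨y, hy, rfl⟩ := List.mem_map.1 hx
      have := hb.1 y hy
      omega
  · intro u x v huv
    rcases List.append_eq_append_iff.1 huv with ⟨r, hr1, hr2⟩ | ⟨r, hr1, hr2⟩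
    · obtain ⟨b1, b2, hb12, h1, h2⟩ := List.map_eq_append_iff.1 hr2
      obtain ⟨x', b3, hb3, h3, h4⟩ := List.map_eq_cons_iff.1 h2
      have := hb.2 b1 x' b3 (by rw [hb12, hb3])
      subst hr1
      rw [← h3, ← h1, nL_append]
      by_cases hb1 : b1 = []
      · subst hb1; simp [nL_nil] at this ⊢; omega
      · rw [nL_map _ _ hb1]; omega
    · cases r with
      | nil =>
        simp only [List.nil_append] at hr2
        obtain ⟨x', b3, hb3, h3, h4⟩ := List.map_eq_cons_iff.1 hr2.symm
        have := hb.2 [] x' b3 hb3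
        simp [nL_nil] at this
        simp only [List.append_nil] at hr1
        subst hr1
        omega
      | cons y r =>
        simp only [List.cons_append, List.cons.injEq] at hr2
        exact ha.2 u x r (by rw [hr1, hr2.1])

theorem wfold_isRGF {L : List (List ℕ)} (h : ∀ c ∈ L, IsRGF c) : IsRGF (wfold L) := by
  induction L with
  | nil => exact isRGF_nil
  | cons a L ih =>
    rw [wfold_cons]
    exact (h a (by simp)).comp (ih fun c hc => h c (by simp [hc]))

/-- Every RGF is a composition of connected ones. -/
theorem exists_components (w : List ℕ) (h : IsRGF w) :
    ∃ L : List (List ℕ), (∀ c ∈ L, IsRGF c ∧ Connected c) ∧ wfold L = w := by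
  induction hn : w.length using Nat.strong_induction_on generalizing w with
  | _ n ih =>
    by_cases hw : w = []
    · exact ⟨[], by simp, by simp [hw, wfold_nil]⟩
    by_cases hc : Connected w
    · exact ⟨[w], by simp [h, hc], by simp [wfold_cons, wfold_nil, comp_nil]⟩
    · simp only [Connected, ne_eq, hw, not_false_eq_true, true_and, not_not] at hc
      obtain ⟨a, b, ha, hb, ha0, hb0, rfl⟩ := hc
      have hl : (rgfComp a b).length = a.length + b.length := by simp [rgfComp]
      have ha1 := List.length_pos_iff.2 ha0
      have hb1 := List.length_pos_iff.2 hb0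
      obtain ⟨L, hL, rfl⟩ := ih a.length (by omega) a ha rfl
      obtain ⟨M, hM, rfl⟩ := ih b.length (by omega) b hb rfl
      refine ⟨L ++ M, ?_, wfold_append _ _⟩
      intro c hc
      rcases List.mem_append.1 hc with hc | hc
      · exact hL c hc
      · exact hM c hc

/-! ### Pattern containment -/

/-- Containment via a list of pairs. -/
theorem patContains_iff (w p : List ℕ) : PatContains w p ↔
    ∃ z : List (ℕ × ℕ), (z.map Prod.fst).Sublist w ∧ z.map Prod.snd = p ∧
      ∀ a ∈ z, ∀ b ∈ z, a.1 < b.1 ↔ a.2 < b.2 := by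
  constructor
  · rintro ⟨s, hs, hl, ho⟩
    refine ⟨s.zip p, ?_, ?_, ?_⟩
    · rwa [List.map_fst_zip hl.le]
    · rw [List.map_snd_zip hl.ge]
    · intro a ha b hb
      obtain ⟨i, hi, rfl⟩ := List.mem_iff_getElem.1 ha
      obtain ⟨j, hj, rfl⟩ := List.mem_iff_getElem.1 hb
      simp only [List.length_zip] at hi hj
      have hi1 : i < s.length := by omega
      have hj1 : j < s.length := by omega
      have hi2 : i < p.length := by omega
      have hj2 : j < p.length := by omega
      have := ho i j hi1 hj1
      rw [List.getD_eq_getElem _ _ hi1, List.getD_eq_getElem _ _ hj1,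
        List.getD_eq_getElem _ _ hi2, List.getD_eq_getElem _ _ hj2] at this
      simpa using this
  · rintro ⟨z, h1, rfl, h3⟩
    refine ⟨z.map Prod.fst, h1, by simp, ?_⟩
    intro i j hi hj
    simp only [List.length_map] at hi hj
    rw [List.getD_eq_getElem _ _ (by simpa using hi), List.getD_eq_getElem _ _ (by simpa using hj),
      List.getD_eq_getElem _ _ (by simpa using hi), List.getD_eq_getElem _ _ (by simpa using hj)]
    simpa using h3 z[i] (by simp) z[j] (by simp)

theorem patContains_nil (w : List ℕ) : PatContains w [] := by
  rw [patContains_iff]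
  exact ⟨[], by simp, by simp, by simp⟩

theorem PatContains.length_le {w p : List ℕ} (h : PatContains w p) : p.length ≤ w.length := by
  obtain ⟨s, hs, hl, -⟩ := h
  rw [← hl]; exact hs.length_le

theorem PatContains.mono {w w' p : List ℕ} (h : PatContains w p) (hw : w.Sublist w') :
    PatContains w' p := by
  obtain ⟨s, hs, hl⟩ := h
  exact ⟨s, hs.trans hw, hl⟩

theorem PatContains.shift {w p : List ℕ} (h : PatContains w p) (K : ℕ) :
    PatContains (w.map (· + K)) p := by
  rw [patContains_iff] at *
  obtain ⟨z, h1, h2, h3⟩ := h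
  refine ⟨z.map (fun a => (a.1 + K, a.2)), ?_, ?_, ?_⟩
  · have := h1.map (· + K)
    simpa [Function.comp_def] using this
  · simpa [Function.comp_def] using h2
  · intro a ha b hb
    obtain ⟨a, ha1, rfl⟩ := List.mem_map.1 ha
    replace ha := ha1
    obtain ⟨b, hb1, rfl⟩ := List.mem_map.1 hb
    replace hb := hb1
    simpa using h3 a ha b hb

theorem PatContains.sub {w p q : List ℕ} (h : PatContains w p) (K : ℕ)
    (hq : (q.map (· + K)).Sublist p) : PatContains w q := by
  rw [patContains_iff] at *
  obtain ⟨z, h1, rfl, h3⟩ := h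
  obtain ⟨y, hy, hy2⟩ := List.sublist_map_iff.1 hq
  have hq2 : q = y.map (fun a => a.2 - K) := by
    have := congrArg (List.map (· - K)) hy2
    simpa [Function.comp_def] using this
  have hK : ∀ a ∈ y, K ≤ a.2 := by
    intro a ha
    have : a.2 ∈ q.map (· + K) := by rw [hy2]; exact List.mem_map_of_mem ha
    obtain ⟨b, -, hb⟩ := List.mem_map.1 this
    omega
  refine ⟨y.map (fun a => (a.1, a.2 - K)), ?_, ?_, ?_⟩
  · have := (hy.map Prod.fst).trans h1
    simpa [Function.comp_def] using this
  · rw [hq2]; simp [Function.comp_def]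
  · intro a ha b hb
    obtain ⟨a, ha1, rfl⟩ := List.mem_map.1 ha
    replace ha := ha1
    obtain ⟨b, hb1, rfl⟩ := List.mem_map.1 hb
    replace hb := hb1
    have := h3 a (hy.mem ha) b (hy.mem hb)
    have := hK a ha
    have := hK b hb
    simp only
    omega

theorem PatContains.comp_left {w p q : List ℕ} (h : PatContains w (rgfComp p q)) :
    PatContains w p := h.sub 0 (by simp [rgfComp])

theorem PatContains.comp_right {w p q : List ℕ} (h : PatContains w (rgfComp p q)) :
    PatContains w q := h.sub (nLetters p) (by simp [rgfComp])

theorem PatContains.comp {w v p q : List ℕ} (h : PatContains w p) (h' : PatContains v q)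
    (hv : ∀ x ∈ v, 1 ≤ x) (hq : ∀ x ∈ q, 1 ≤ x) :
    PatContains (rgfComp w v) (rgfComp p q) := by
  rw [patContains_iff] at *
  obtain ⟨z, h1, rfl, h3⟩ := h
  obtain ⟨y, g1, rfl, g3⟩ := h'
  refine ⟨z ++ y.map (fun a => (a.1 + nLetters w, a.2 + nLetters (z.map Prod.snd))), ?_, ?_, ?_⟩
  · have := h1.append (g1.map (· + nLetters w))
    simpa [Function.comp_def, rgfComp] using this
  · simp [Function.comp_def, rgfComp]
  · have hz : ∀ a ∈ z, a.1 ≤ nLetters w ∧ a.2 ≤ nLetters (z.map Prod.snd) := fun a ha =>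
      ⟨le_nL (h1.mem (List.mem_map_of_mem ha)), le_nL (List.mem_map_of_mem ha)⟩
    have hy : ∀ a ∈ y, 1 ≤ a.1 ∧ 1 ≤ a.2 := fun a ha =>
      ⟨hv _ (g1.mem (List.mem_map_of_mem ha)), hq _ (List.mem_map_of_mem ha)⟩
    intro a ha b hb
    rcases List.mem_append.1 ha with ha | ha <;> rcases List.mem_append.1 hb with hb | hb
    · exact h3 a ha b hb
    · obtain ⟨b, hb1, rfl⟩ := List.mem_map.1 hb
      replace hb := hb1
      have := hz a ha
      have := hy b hb
      simp only
      omega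
    · obtain ⟨a, ha1, rfl⟩ := List.mem_map.1 ha
      replace ha := ha1
      have := hz b hb
      have := hy a ha
      simp only
      omega
    · obtain ⟨a, ha1, rfl⟩ := List.mem_map.1 ha
      replace ha := ha1
      obtain ⟨b, hb1, rfl⟩ := List.mem_map.1 hb
      replace hb := hb1
      simpa using g3 a ha b hb

/-- An occurrence in `w[v]` cuts the pattern in two. -/
theorem PatContains.split {w v p : List ℕ} (h : PatContains (rgfComp w v) p)
    (hv : ∀ x ∈ v, 1 ≤ x) : ∃ p1 p2, p = p1 ++ p2 ∧ (∀ x ∈ p1, ∀ y ∈ p2, x < y) ∧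
      PatContains w p1 ∧ PatContains v p2 := by
  rw [patContains_iff] at h
  obtain ⟨z, h1, rfl, h3⟩ := h
  obtain ⟨s1, s2, h4, h5, h6⟩ := List.sublist_append_iff.1 h1
  obtain ⟨z1, z2, rfl, rfl, rfl⟩ := List.map_eq_append_iff.1 h4
  refine ⟨z1.map Prod.snd, z2.map Prod.snd, by simp, ?_, ?_, ?_⟩
  · intro x hx y hy
    obtain ⟨a, ha, rfl⟩ := List.mem_map.1 hx
    obtain ⟨b, hb, rfl⟩ := List.mem_map.1 hy
    rw [← h3 a (by simp [ha]) b (by simp [hb])]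
    have q1 := le_nL (h5.mem (List.mem_map_of_mem ha))
    have q2 := h6.mem (List.mem_map_of_mem hb)
    obtain ⟨c, hc, hc'⟩ := List.mem_map.1 q2
    have := hv c hc
    omega
  · rw [patContains_iff]
    exact ⟨z1, h5, rfl, fun a ha b hb => h3 a (by simp [ha]) b (by simp [hb])⟩
  · rw [patContains_iff]
    obtain ⟨y, hy, hy2⟩ := List.sublist_map_iff.1 h6
    have hyy : y = z2.map (fun a => a.1 - nLetters w) := by
      have := congrArg (List.map (· - nLetters w)) hy2
      simpa [Function.comp_def] using this.symm
    have hK : ∀ a ∈ z2, nLetters w ≤ a.1 := by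
      intro a ha
      have : a.1 ∈ y.map (· + nLetters w) := by rw [← hy2]; exact List.mem_map_of_mem ha
      obtain ⟨b, -, hb⟩ := List.mem_map.1 this
      omega
    refine ⟨z2.map (fun a => (a.1 - nLetters w, a.2)), ?_, by simp [Function.comp_def], ?_⟩
    · rw [hyy] at hy
      simpa [Function.comp_def] using hy
    · intro a ha b hb
      obtain ⟨a, ha1, rfl⟩ := List.mem_map.1 ha
      replace ha := ha1
      obtain ⟨b, hb1, rfl⟩ := List.mem_map.1 hb
      replace hb := hb1
      have := h3 a (by simp [ha]) b (by simp [hb])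
      have := hK a ha
      have := hK b hb
      simp only
      omega

/-- A final letter `1` is useless for patterns whose last letter is not minimal. -/
theorem PatContains.drop_one {w p : List ℕ} (hw : ∀ x ∈ w, 1 ≤ x) (y x : ℕ) (hx : x ∈ p)
    (hxy : x < y) (h : PatContains (w ++ [1]) (p ++ [y])) : PatContains w (p ++ [y]) := by
  rw [patContains_iff] at *
  obtain ⟨z, h1, h2, h3⟩ := h
  refine ⟨z, ?_, h2, h3⟩
  obtain ⟨z1, z2, rfl, rfl, hz2⟩ := List.map_eq_append_iff.1 h2
  obtain ⟨a, z3, rfl, ha, hz3⟩ := List.map_eq_cons_iff.1 hz2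
  have : z3 = [] := by simpa using hz3
  subst this
  obtain ⟨b, hb, hb'⟩ := List.mem_map.1 hx
  have hba : b.1 < a.1 := by
    rw [h3 b (by simp [hb]) a (by simp)]; omega
  have hb1 : 1 ≤ b.1 := by
    have : b.1 ∈ w ++ [1] := h1.mem (by
      rw [List.map_append]; exact List.mem_append_left _ (List.mem_map_of_mem hb))
    rcases List.mem_append.1 this with h | h
    · exact hw _ h
    · have : b.1 = 1 := by simpa using h
      omega
  obtain ⟨s1, s2, h4, h5, h6⟩ := List.sublist_append_iff.1 h1
  rw [h4]
  rcases List.sublist_singleton.1 h6 with rfl | rfl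
  · simpa using h5
  · simp only [List.map_append, List.map_cons, List.map_nil] at h4
    have := List.append_inj_right' h4 (by simp)
    simp at this
    omega

/-- A cut of a composition of connected RGFs occurs between components. -/
theorem wfold_cut (L : List (List ℕ)) (hL : ∀ c ∈ L, IsRGF c ∧ Connected c) (p1 p2 : List ℕ)
    (h : wfold L = p1 ++ p2) (hlt : ∀ x ∈ p1, ∀ y ∈ p2, x < y) :
    ∃ L1 L2, L = L1 ++ L2 ∧ p1 = wfold L1 ∧ p2 = (wfold L2).map (· + nLetters p1) := by
  induction L generalizing p1 p2 with
  | nil =>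
    have h' : p1 = [] ∧ p2 = [] := by simpa [wfold_nil] using h.symm
    refine ⟨[], [], rfl, h'.1, ?_⟩
    simp [h'.2, wfold_nil]
  | cons c L ih =>
    by_cases hp : p1 = []
    · refine ⟨[], c :: L, rfl, hp, ?_⟩
      subst hp
      simpa [nL_nil] using h.symm
    have hc := hL c (by simp)
    have h' := h
    rw [wfold_cons, rgfComp] at h
    rcases List.append_eq_append_iff.1 h with ⟨r, hr1, hr2⟩ | ⟨r, hr1, hr2⟩
    · obtain ⟨r', p2', hrp, hr', hp2'⟩ := List.map_eq_append_iff.1 hr2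
      obtain ⟨L1, L2, hL12, h1, h2⟩ := ih (fun c hc => hL c (by simp [hc])) r' p2' hrp (by
        intro x hx y hy
        have := hlt (x + nLetters c) (by rw [hr1, ← hr']; simp [hx]) (y + nLetters c)
          (by rw [← hp2']; simp [hy])
        omega)
      have h3 : p1 = rgfComp c r' := by rw [hr1, ← hr', rgfComp]
      refine ⟨c :: L1, L2, by simp [hL12], ?_, ?_⟩
      · rw [wfold_cons, h3, h1]
      · rw [h3, nL_comp, ← hp2', h2]
        simp [Function.comp_def]
        intro a _
        omega
    · by_cases hr : r = []
      · subst hr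
        refine ⟨[c], L, rfl, ?_, ?_⟩
        · simp [wfold_cons, wfold_nil, comp_nil, hr1]
        · simp only [List.append_nil] at hr1
          simpa [hr1] using hr2
      · exfalso
        have hc1 := hc.1
        rw [hr1] at hc1
        obtain ⟨b, hb, hb2, hb3⟩ := hc1.suffix (by
          intro x hx y hy
          exact hlt x hx y (by rw [hr2]; simp [hy]))
        exact hc.2.2 ⟨p1, b, hc1.initial_part, hb, hp, by rintro rfl; simp at hb3; exact hr hb3,
          by rw [hr1, hb2]⟩

theorem patContains_comp_iff (L : List (List ℕ)) (hL : ∀ c ∈ L, IsRGF c ∧ Connected c)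
    (w v : List ℕ) (hv : ∀ x ∈ v, 1 ≤ x) : PatContains (rgfComp w v) (wfold L) ↔
      ∃ L1 L2, L = L1 ++ L2 ∧ PatContains w (wfold L1) ∧ PatContains v (wfold L2) := by
  constructor
  · intro h
    obtain ⟨p1, p2, h1, h2, h3, h4⟩ := h.split hv
    obtain ⟨L1, L2, hL12, h5, h6⟩ := wfold_cut L hL p1 p2 h1 h2
    refine ⟨L1, L2, hL12, h5 ▸ h3, h4.sub (nLetters p1) ?_⟩
    rw [h6]
  · rintro ⟨L1, L2, rfl, h1, h2⟩
    rw [wfold_append]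
    refine h1.comp h2 hv ?_
    intro x hx
    exact (wfold_isRGF fun c hc => (hL c (by simp [hc])).1).pos hx

/-- Appending `1` does not create a disconnected pattern. -/
theorem patContains_one_iff (c d : List ℕ) (L : List (List ℕ)) (hc0 : c ≠ [])
    (hd : IsRGF d) (hd0 : d ≠ []) (hL : ∀ e ∈ L, IsRGF e)
    (w : List ℕ) (hw : ∀ x ∈ w, 1 ≤ x) :
    PatContains (w ++ [1]) (wfold (c :: d :: L)) ↔ PatContains w (wfold (c :: d :: L)) := by
  constructor
  · intro h
    have hq : IsRGF (wfold (d :: L)) := wfold_isRGF (by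
      intro e he
      rcases List.mem_cons.1 he with rfl | he
      · exact hd
      · exact hL e he)
    have hq0 : wfold (d :: L) ≠ [] := by
      rw [wfold_cons, rgfComp]; simp [hd0]
    rw [wfold_cons] at h ⊢
    rcases List.eq_nil_or_concat (wfold (d :: L)) with h0 | ⟨q, y, hqy⟩
    · exact absurd h0 hq0
    · have e : rgfComp c (wfold (d :: L)) =
          (c ++ q.map (· + nLetters c)) ++ [y + nLetters c] := by
        rw [hqy, rgfComp]; simp
      rw [e] at h ⊢
      refine PatContains.drop_one hw _ (nLetters c) ?_ ?_ h
      · exact List.mem_append_left _ (nL_mem hc0)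
      · have := hq.pos (x := y) (by rw [hqy]; simp)
        omega
  · intro h
    exact h.mono (by simp)

/-! ### Encoding non-crossing RGFs by binary trees -/

/-- The non-crossing RGF of a binary tree. -/
def enc : BinaryTree Unit → List ℕ
  | .nil => []
  | .node _ a b => rgfComp (enc a ++ [1]) (enc b)

/-- The number of components of the RGF of a binary tree. -/
def spine : BinaryTree Unit → ℕ
  | .nil => 0
  | .node _ _ b => spine b + 1

theorem isRGF_append_one {w : List ℕ} (h : IsRGF w) : IsRGF (w ++ [1]) := by
  rw [isRGF_iff] at *
  constructor
  · intro x hx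
    rcases List.mem_append.1 hx with hx | hx
    · exact h.1 x hx
    · have : x = 1 := by simpa using hx
      omega
  · intro u x v huv
    rcases List.append_eq_append_iff.1 huv with ⟨r, hr1, hr2⟩ | ⟨r, hr1, hr2⟩
    · have : x ∈ [1] := by rw [hr2]; simp
      have : x = 1 := by simpa using this
      omega
    · cases r with
      | nil =>
        simp at hr2
        omega
      | cons y r =>
        simp only [List.cons_append, List.cons.injEq] at hr2
        exact h.2 u x r (by rw [hr1, hr2.1])

theorem nonCrossing_append_one {w : List ℕ} (h : IsRGF w) (hn : NonCrossing w) :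
    NonCrossing (w ++ [1]) := fun hc =>
  hn (PatContains.drop_one (p := [1, 2, 1]) h.1 2 1 (by simp) (by norm_num) hc)

theorem nonCrossing_comp {w v : List ℕ} (hv : ∀ x ∈ v, 1 ≤ x) (hw : NonCrossing w)
    (hn : NonCrossing v) : NonCrossing (rgfComp w v) := by
  intro h
  obtain ⟨p1, p2, h1, h2, h3, h4⟩ := h.split hv
  match p1, h1 with
  | [], h1 => simp only [List.nil_append] at h1; exact hn (h1 ▸ h4)
  | [a], h1 => simp at h1; obtain ⟨rfl, rfl⟩ := h1; simp at h2
  | [a, b], h1 => simp at h1; obtain ⟨rfl, rfl, rfl⟩ := h1; simp at h2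
  | [a, b, c], h1 => simp at h1; obtain ⟨rfl, rfl, rfl, rfl⟩ := h1; simp at h2
  | [a, b, c, d], h1 =>
    simp at h1; obtain ⟨rfl, rfl, rfl, rfl, rfl⟩ := h1; exact hw h3
  | a :: b :: c :: d :: e :: f, h1 => simp at h1

theorem enc_isRGF (t : BinaryTree Unit) : IsRGF (enc t) := by
  induction t with
  | nil => exact isRGF_nil
  | node _ a b iha ihb => exact (isRGF_append_one iha).comp ihb

theorem enc_nonCrossing (t : BinaryTree Unit) : NonCrossing (enc t) := by
  induction t with
  | nil => intro h; simpa [enc] using h.length_le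
  | node _ a b iha ihb =>
    exact nonCrossing_comp (enc_isRGF b).1 (nonCrossing_append_one (enc_isRGF a) iha) ihb

theorem enc_length (t : BinaryTree Unit) : (enc t).length = t.numNodes := by
  induction t with
  | nil => rfl
  | node _ a b iha ihb =>
    simp [enc, rgfComp, iha, ihb]; omega

theorem connected_append_one (w : List ℕ) : Connected (w ++ [1]) := by
  refine ⟨by simp, ?_⟩
  rintro ⟨a, b, ha, hb, ha0, hb0, h⟩
  rcases List.eq_nil_or_concat b with rfl | ⟨b', y, rfl⟩
  · exact hb0 rfl
  · rw [List.concat_eq_append] at h hb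
    have e : rgfComp a (b' ++ [y]) = (a ++ b'.map (· + nLetters a)) ++ [y + nLetters a] := by
      simp [rgfComp]
    rw [e] at h
    have := List.append_inj_right' h (by simp)
    simp at this
    have h1 := hb.pos (x := y) (by simp)
    have h2 := ha.pos (nL_mem ha0)
    omega

theorem enc_hasComponents (t : BinaryTree Unit) : HasComponents (enc t) (spine t) := by
  induction t with
  | nil => exact ⟨[], rfl, by simp, rfl⟩
  | node _ a b iha ihb =>
    obtain ⟨l, h1, h2, h3⟩ := ihb
    refine ⟨(enc a ++ [1]) :: l, by simp [h1, spine], ?_, ?_⟩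
    · intro c hc
      rcases List.mem_cons.1 hc with rfl | hc
      · exact ⟨isRGF_append_one (enc_isRGF a), connected_append_one _⟩
      · exact h2 c hc
    · simp only [enc, List.foldr_cons]; rw [← h3]

theorem one_append_inj {u u' m m' : List ℕ} (hm : ∀ x ∈ m, 2 ≤ x) (hm' : ∀ x ∈ m', 2 ≤ x)
    (h : (u ++ [1]) ++ m = (u' ++ [1]) ++ m') : u = u' ∧ m = m' := by
  have key : ∀ {u u' m m' : List ℕ}, (∀ x ∈ m, 2 ≤ x) → (u ++ [1]) ++ m = (u' ++ [1]) ++ m' →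
      ∀ r, (u' ++ [1]) = (u ++ [1]) ++ r → m = r ++ m' → r = [] := by
    intro u u' m m' hm h r hr1 hr2
    rcases List.eq_nil_or_concat r with rfl | ⟨r', y, rfl⟩
    · rfl
    · rw [List.concat_eq_append] at hr1 hr2
      rw [← List.append_assoc] at hr1
      have h1 := List.append_inj_right' hr1 (by simp)
      simp at h1
      have := hm y (by rw [hr2]; simp)
      omega
  rcases List.append_eq_append_iff.1 h with ⟨r, hr1, hr2⟩ | ⟨r, hr1, hr2⟩
  · have := key hm h r hr1 hr2
    subst this
    simp at hr1 hr2
    exact ⟨hr1.symm, hr2⟩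
  · have := key hm' h.symm r hr1 hr2
    subst this
    simp at hr1 hr2
    exact ⟨hr1, hr2.symm⟩

theorem shift_ge_two (a : List ℕ) {b : List ℕ} (hb : IsRGF b) :
    ∀ x ∈ b.map (· + nLetters (a ++ [1])), 2 ≤ x := by
  intro x hx
  obtain ⟨y, hy, rfl⟩ := List.mem_map.1 hx
  have := hb.pos hy
  have := le_nL (a := a ++ [1]) (x := 1) (by simp)
  omega

theorem enc_injective : Function.Injective enc := by
  intro t
  induction t with
  | nil =>
    intro t h
    cases t with
    | nil => rfl
    | node _ a b => simp [enc, rgfComp] at h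
  | node _ a b iha ihb =>
    intro t h
    cases t with
    | nil => simp [enc, rgfComp] at h
    | node _ a' b' =>
      simp only [enc, rgfComp] at h
      obtain ⟨h1, h2⟩ := one_append_inj (shift_ge_two _ (enc_isRGF b))
        (shift_ge_two _ (enc_isRGF b')) h
      have ha := iha h1
      subst ha
      have hb := ihb (List.map_injective_iff.2 (add_left_injective _) h2)
      subst hb
      rfl

theorem exists_last_one (w : List ℕ) (h : 1 ∈ w) : ∃ u m, w = u ++ [1] ++ m ∧ 1 ∉ m := by
  induction w with
  | nil => simp at h
  | cons x w ih =>
    by_cases hw : 1 ∈ w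
    · obtain ⟨u, m, h1, h2⟩ := ih hw
      exact ⟨x :: u, m, by simp [h1], h2⟩
    · rcases List.mem_cons.1 h with rfl | h
      · exact ⟨[], w, by simp, hw⟩
      · exact absurd h hw

theorem exists_enc (w : List ℕ) (h : IsRGF w) (hn : NonCrossing w) : ∃ t, enc t = w := by
  induction hl : w.length using Nat.strong_induction_on generalizing w with
  | _ n ih =>
    by_cases hw : w = []
    · exact ⟨.nil, by simp [hw, enc]⟩
    have h1w : 1 ∈ w := h.mem_of_le le_rfl (h.pos (nL_mem hw))
    obtain ⟨u, m, rfl, hm⟩ := exists_last_one w h1w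
    have hu1 : IsRGF (u ++ [1]) := h.initial_part
    have hu : IsRGF u := hu1.initial_part
    have hdis : ∀ x ∈ m, x ∉ u ++ [1] := by
      intro x hx hxu
      have hx1 : x ≠ 1 := fun e => hm (e ▸ hx)
      have hxu : x ∈ u := by
        rcases List.mem_append.1 hxu with h | h
        · exact h
        · exact absurd (by simpa using h) hx1
      have hx2 := h.pos (x := x) (by simp [hx])
      obtain ⟨y, u', rfl⟩ := List.exists_cons_of_ne_nil (List.ne_nil_of_mem hxu)
      have hy : y = 1 := by
        have a := ((isRGF_iff _).1 hu).2 [] y u' rfl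
        have b := hu.pos (x := y) (by simp)
        simp [nL_nil] at a
        omega
      subst hy
      have hxu' : x ∈ u' := by
        rcases List.mem_cons.1 hxu with h | h
        · exact absurd h hx1
        · exact h
      apply hn
      rw [patContains_iff]
      refine ⟨[(1, 1), (x, 2), (1, 1), (x, 2)], ?_, by simp, ?_⟩
      · have s1 : [x].Sublist u' := List.singleton_sublist.2 hxu'
        have s2 : [x].Sublist m := List.singleton_sublist.2 hx
        have := ((s1.cons_cons 1).append (List.Sublist.refl [1])).append s2
        simpa using this
      · simp
        omega
    have hgt : ∀ x ∈ u ++ [1], ∀ y ∈ m, x < y := by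
      intro x hx y hy
      by_contra hlt
      have : y ≤ nLetters (u ++ [1]) := (not_lt.1 hlt).trans (le_nL hx)
      exact hdis y hy (hu1.mem_of_le (h.pos (by simp [hy])) this)
    obtain ⟨b, hb, hb2, hb3⟩ := h.suffix hgt
    have hnu : NonCrossing u := fun hc => hn (hc.mono (by simp))
    have hnb : NonCrossing b := fun hc => hn (by
      rw [hb2]
      exact (hc.shift _).mono (List.sublist_append_right _ _))
    have hlen : m.length = b.length := by rw [hb3]; simp
    simp only [List.length_append, List.length_cons, List.length_nil] at hl
    obtain ⟨t1, ht1⟩ := ih u.length (by omega) u hu hnu rfl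
    obtain ⟨t2, ht2⟩ := ih b.length (by omega) b hb hnb rfl
    exact ⟨.node () t1 t2, by rw [hb2, enc, ht1, ht2]⟩

theorem exists_enc_of_connected (c : List ℕ) (h : IsRGF c) (hc : Connected c)
    (hn : NonCrossing c) : ∃ a, c = enc a ++ [1] := by
  obtain ⟨t, rfl⟩ := exists_enc c h hn
  cases t with
  | nil => exact absurd rfl hc.1
  | node _ a b =>
    cases b with
    | nil => exact ⟨a, by simp [enc, rgfComp]⟩
    | node _ b1 b2 =>
      exfalso
      refine hc.2 ⟨enc a ++ [1], enc (.node () b1 b2), isRGF_append_one (enc_isRGF a),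
        enc_isRGF _, by simp, by simp [enc, rgfComp], by simp [enc]⟩

theorem exists_enc_spine (l : List (List ℕ)) (hl : ∀ c ∈ l, IsRGF c ∧ Connected c)
    (hn : NonCrossing (wfold l)) : ∃ t, enc t = wfold l ∧ spine t = l.length := by
  induction l with
  | nil => exact ⟨.nil, rfl, rfl⟩
  | cons c l ih =>
    obtain ⟨t, ht, ht2⟩ := ih (fun c hc => hl c (by simp [hc])) (fun hc => hn (by
      rw [wfold_cons]; exact (hc.shift _).mono (List.sublist_append_right _ _)))
    obtain ⟨a, ha⟩ := exists_enc_of_connected c (hl c (by simp)).1 (hl c (by simp)).2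
      (fun hc => hn (by rw [wfold_cons]; exact hc.mono (List.sublist_append_left _ _)))
    exact ⟨.node () a t, by rw [enc, ← ha, ht, wfold_cons], by simp [spine, ht2]⟩

theorem enc_hasComponents_iff (t : BinaryTree Unit) (p : ℕ) :
    HasComponents (enc t) p ↔ spine t = p := by
  constructor
  · rintro ⟨l, rfl, h2, h3⟩
    have h3 : enc t = wfold l := h3
    obtain ⟨t', h4, h5⟩ := exists_enc_spine l h2 (h3 ▸ enc_nonCrossing t)
    have := enc_injective (h3.trans h4.symm)
    rw [this, h5]
  · rintro rfl
    exact enc_hasComponents t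

open Classical in
theorem ncCount_eq (n p : ℕ) (σ : List ℕ) : ncCount n p σ =
    ((BinaryTree.treesOfNumNodesEq n).filter
      (fun t => spine t = p ∧ ¬ PatContains (enc t) σ)).card := by
  rw [ncCount, ← Finset.card_image_of_injective _ enc_injective, ← Set.ncard_coe_finset]
  congr 1
  ext w
  simp only [Set.mem_ofPred_eq, Finset.coe_image, Set.mem_image, Finset.coe_filter,
    BinaryTree.mem_treesOfNumNodesEq]
  constructor
  · rintro ⟨h1, h2, h3, h4, h5⟩
    obtain ⟨t, rfl⟩ := exists_enc w h1 h2
    exact ⟨t, ⟨by rw [← enc_length, h3], (enc_hasComponents_iff t p).1 h5, h4⟩, rfl⟩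
  · rintro ⟨t, ⟨h1, h2, h3⟩, rfl⟩
    exact ⟨enc_isRGF t, enc_nonCrossing t, by rw [enc_length, h1], h3,
      (enc_hasComponents_iff t p).2 h2⟩

/-! ### The matching automaton -/

/-- The factors of the pattern between positions `i` and `j`. -/
def seg (L : List (List ℕ)) (i j : ℕ) : List (List ℕ) := (L.take j).drop i

theorem seg_self (L : List (List ℕ)) (i : ℕ) : seg L i i = [] := by
  simp [seg]

theorem seg_append (L : List (List ℕ)) {i j k : ℕ} (h1 : i ≤ j) (h2 : j ≤ k) :
    seg L i k = seg L i j ++ seg L j k := by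
  simp only [seg, List.drop_take]
  have : L.drop j = (L.drop i).drop (j - i) := by rw [List.drop_drop]; congr 1; omega
  rw [this]
  have e : k - i = (j - i) + (k - j) := by omega
  rw [e, List.take_add]

theorem seg_succ (L : List (List ℕ)) {i : ℕ} (h : i < L.length) :
    seg L i (i + 1) = [L.getD i []] := by
  rw [seg, List.getD_eq_getElem _ _ h, List.drop_take]
  have : i + 1 - i = 1 := by omega
  rw [this, List.drop_eq_getElem_cons h, List.take_succ_cons, List.take_zero]

theorem seg_length (L : List (List ℕ)) {i j : ℕ} (h : j ≤ L.length) :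
    (seg L i j).length = j - i := by
  simp [seg, h]

theorem seg_mem {L : List (List ℕ)} {i j : ℕ} {c : List ℕ} (h : c ∈ seg L i j) : c ∈ L :=
  List.mem_of_mem_take (List.mem_of_mem_drop h)

/-- `w` contains the factors of the pattern between `i` and `j`. -/
def Rch (L : List (List ℕ)) (w : List ℕ) (i j : ℕ) : Prop := PatContains w (wfold (seg L i j))

theorem Rch.right {L : List (List ℕ)} {w : List ℕ} {i j k : ℕ} (h : Rch L w i k) (h1 : i ≤ j)
    (h2 : j ≤ k) : Rch L w i j := by
  rw [Rch, seg_append L h1 h2, wfold_append] at h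
  exact h.comp_left

theorem Rch.left {L : List (List ℕ)} {w : List ℕ} {i j k : ℕ} (h : Rch L w i k) (h1 : i ≤ j)
    (h2 : j ≤ k) : Rch L w j k := by
  rw [Rch, seg_append L h1 h2, wfold_append] at h
  exact h.comp_right

theorem rch_self (L : List (List ℕ)) (w : List ℕ) (i : ℕ) : Rch L w i i := by
  rw [Rch, seg_self, wfold_nil]; exact patContains_nil w

open Classical in
/-- The state reached from state `i` after reading `w`. -/
noncomputable def st (L : List (List ℕ)) (w : List ℕ) (i : ℕ) : ℕ :=
  max i (Nat.findGreatest (fun j => i ≤ j ∧ Rch L w i j) L.length)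

theorem le_st (L : List (List ℕ)) (w : List ℕ) (i : ℕ) : i ≤ st L w i := le_max_left _ _

theorem st_le {L : List (List ℕ)} (w : List ℕ) {i : ℕ} (h : i ≤ L.length) :
    st L w i ≤ L.length := by
  classical exact max_le h (Nat.findGreatest_le _)

theorem st_of_ge {L : List (List ℕ)} (w : List ℕ) {i : ℕ} (h : L.length ≤ i) :
    st L w i = i := by
  classical exact max_eq_left ((Nat.findGreatest_le _).trans h)

theorem le_st_iff {L : List (List ℕ)} (w : List ℕ) {i j : ℕ} (h1 : i ≤ j) (h2 : j ≤ L.length) :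
    j ≤ st L w i ↔ Rch L w i j := by
  classical
  have hsp : Rch L w i (st L w i) := by
    have := Nat.findGreatest_spec (P := fun j => i ≤ j ∧ Rch L w i j) (h1.trans h2)
      ⟨le_rfl, rch_self L w i⟩
    have e : st L w i = Nat.findGreatest (fun j => i ≤ j ∧ Rch L w i j) L.length := by
      rw [st]
      convert max_eq_right this.1
    rw [e]
    exact this.2
  constructor
  · intro h
    exact hsp.right h1 h
  · intro h
    refine le_trans ?_ (le_max_right _ _)
    exact Nat.le_findGreatest h2 ⟨h1, h⟩

theorem st_mono (L : List (List ℕ)) (w : List ℕ) {i j : ℕ} (h : i ≤ j) : st L w i ≤ st L w j := by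
  by_cases hj : L.length ≤ j
  · rw [st_of_ge w hj]
    by_cases hi : L.length ≤ i
    · rw [st_of_ge w hi]; exact h
    · exact (st_le w (by omega)).trans hj
  · by_cases hs : st L w i ≤ j
    · exact hs.trans (le_st _ _ _)
    · have hk : st L w i ≤ L.length := st_le w (by omega)
      rw [le_st_iff w (by omega) hk]
      exact ((le_st_iff w (le_st _ _ _) hk).1 le_rfl).left h (by omega)

theorem st_comp {L : List (List ℕ)} (hL : ∀ c ∈ L, IsRGF c ∧ Connected c) (w v : List ℕ)
    (hv : ∀ x ∈ v, 1 ≤ x) (i : ℕ) : st L (rgfComp w v) i = st L v (st L w i) := by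
  by_cases hi : L.length ≤ i
  · rw [st_of_ge _ hi, st_of_ge w hi, st_of_ge v hi]
  have hi' : i ≤ L.length := by omega
  apply le_antisymm
  · have h1 := st_le (rgfComp w v) hi'
    have h2 := le_st L (rgfComp w v) i
    have h3 := (le_st_iff (rgfComp w v) h2 h1).1 le_rfl
    generalize st L (rgfComp w v) i = j at *
    rw [Rch, patContains_comp_iff _ (fun c hc => hL c (seg_mem hc)) _ _ hv] at h3
    obtain ⟨L1, L2, h4, h5, h6⟩ := h3
    have hlen := congrArg List.length h4
    rw [seg_length L h1, List.length_append] at hlen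
    have hm : seg L i j = seg L i (i + L1.length) ++ seg L (i + L1.length) j :=
      seg_append L (by omega) (by omega)
    have hl2 : (seg L i (i + L1.length)).length = L1.length := by
      rw [seg_length L (by omega)]; omega
    have := List.append_inj (h4.symm.trans hm) hl2.symm
    have a1 : i + L1.length ≤ st L w i := by
      rw [le_st_iff w (by omega) (by omega), Rch, ← this.1]; exact h5
    have a2 : j ≤ st L v (i + L1.length) := by
      rw [le_st_iff v (by omega) (by omega), Rch, ← this.2]; exact h6
    exact a2.trans (st_mono L v a1)
  · have h1 := st_le w hi'
    have h2 := st_le v h1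
    have h3 := le_st L w i
    have h4 := le_st L v (st L w i)
    have a1 := (le_st_iff w h3 h1).1 le_rfl
    have a2 := (le_st_iff v h4 h2).1 le_rfl
    rw [le_st_iff _ (h3.trans h4) h2, Rch,
      patContains_comp_iff _ (fun c hc => hL c (seg_mem hc)) _ _ hv]
    exact ⟨_, _, seg_append L h3 h4, a1, a2⟩

open Classical in
/-- Indicator of `w1` containing `σ` while `w` avoids it. -/
noncomputable def crit (σ w : List ℕ) : ℤ :=
  if PatContains (w ++ [1]) σ ∧ ¬ PatContains w σ then 1 else 0

theorem rch_succ_iff {L : List (List ℕ)} (w : List ℕ) {i : ℕ} (h : i < L.length) :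
    Rch L w i (i + 1) ↔ PatContains w (L.getD i []) := by
  rw [Rch, seg_succ L h, wfold_cons, wfold_nil, comp_nil]

theorem rch_one_iff {L : List (List ℕ)} (hL : ∀ c ∈ L, IsRGF c ∧ Connected c) (w : List ℕ)
    (hw : ∀ x ∈ w, 1 ≤ x) {i j : ℕ} (h1 : i + 2 ≤ j) (h2 : j ≤ L.length) :
    Rch L (w ++ [1]) i j ↔ Rch L w i j := by
  have hl := seg_length L (i := i) h2
  match hs : seg L i j with
  | [] => rw [hs] at hl; simp at hl; omega
  | [a] => rw [hs] at hl; simp at hl; omega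
  | c :: d :: M =>
    have hm : ∀ e ∈ c :: d :: M, IsRGF e ∧ Connected e := by
      intro e he; rw [← hs] at he; exact hL e (seg_mem he)
    rw [Rch, Rch, hs]
    exact patContains_one_iff c d M (hm c (by simp)).2.1 (hm d (by simp)).1 (hm d (by simp)).2.1
      (fun e he => (hm e (by simp [he])).1) w hw

theorem st_one {L : List (List ℕ)} (hL : ∀ c ∈ L, IsRGF c ∧ Connected c) (w : List ℕ)
    (hw : ∀ x ∈ w, 1 ≤ x) (i : ℕ) (v : ℕ → ℤ) :
    v (st L (w ++ [1]) i) = v (st L w i) + crit (L.getD i []) w * (v (i + 1) - v i) := by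
  by_cases hi : L.length ≤ i
  · rw [st_of_ge _ hi, st_of_ge _ hi, List.getD_eq_default _ _ hi]
    have : crit [] w = 0 := by
      rw [crit, if_neg]
      rintro ⟨-, h⟩
      exact h (patContains_nil w)
    rw [this]; ring
  push Not at hi
  have hle : st L w i ≤ st L (w ++ [1]) i := by
    rw [le_st_iff _ (le_st _ _ _) (st_le _ hi.le)]
    exact ((le_st_iff w (le_st _ _ _) (st_le _ hi.le)).1 le_rfl).mono (by simp)
  have hge : st L (w ++ [1]) i ≤ max (i + 1) (st L w i) := by
    by_cases h : st L (w ++ [1]) i ≤ i + 1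
    · exact h.trans (le_max_left _ _)
    · refine le_trans ?_ (le_max_right _ _)
      rw [le_st_iff _ (by omega) (st_le _ hi.le), ← rch_one_iff hL w hw (by omega) (st_le _ hi.le),
        ← le_st_iff _ (by omega) (st_le _ hi.le)]
  have e1 := le_st_iff w (i := i) (j := i + 1) (by omega) hi
  have e2 := le_st_iff (w ++ [1]) (i := i) (j := i + 1) (by omega) hi
  rw [rch_succ_iff _ hi] at e1 e2
  have l1 := le_st L w i
  have l2 := le_st L (w ++ [1]) i
  rw [crit]
  split_ifs with h
  · have h1 : i + 1 ≤ st L (w ++ [1]) i := e2.2 h.1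
    have h2 : ¬ i + 1 ≤ st L w i := fun h' => h.2 (e1.1 h')
    have h3 : st L w i = i := by omega
    have h4 : st L (w ++ [1]) i = i + 1 := by omega
    rw [h3, h4]; ring
  · have : st L (w ++ [1]) i = st L w i := by
      by_cases h1 : i + 1 ≤ st L w i
      · omega
      · have : ¬ i + 1 ≤ st L (w ++ [1]) i := fun h2 => h ⟨e2.1 h2, fun h3 => h1 (e1.2 h3)⟩
        omega
    rw [this]; ring

/-! ### Generating functions -/

/-- Operators on functions of the states. -/
abbrev Op := Module.End ℤ (ℕ → ℤ)

/-- Composition with the transition function of `w`. -/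
noncomputable def opM (L : List (List ℕ)) (w : List ℕ) : Op := LinearMap.funLeft ℤ ℤ (st L w)

theorem opM_apply (L : List (List ℕ)) (w : List ℕ) (v : ℕ → ℤ) (i : ℕ) :
    opM L w v i = v (st L w i) := rfl

theorem opM_comp {L : List (List ℕ)} (hL : ∀ c ∈ L, IsRGF c ∧ Connected c) (w v : List ℕ)
    (hv : ∀ x ∈ v, 1 ≤ x) : opM L (rgfComp w v) = opM L w * opM L v := by
  ext1 x
  funext i
  rw [Module.End.mul_apply, opM_apply, opM_apply, opM_apply, st_comp hL w v hv]

theorem opM_nil {L : List (List ℕ)} (hL : ∀ c ∈ L, IsRGF c ∧ Connected c) : opM L [] = 1 := by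
  ext1 x
  funext i
  rw [opM_apply, Module.End.one_apply]
  congr 1
  by_cases hi : L.length ≤ i
  · exact st_of_ge _ hi
  · apply le_antisymm _ (le_st _ _ _)
    by_contra h
    push Not at h hi
    have h1 := (le_st_iff (L := L) [] (i := i) (j := i + 1) (by omega) hi).1 h
    rw [rch_succ_iff _ hi] at h1
    have h2 := h1.length_le
    rw [List.getD_eq_getElem _ _ hi] at h2
    exact (hL L[i] (by simp)).2.1 (by simpa using h2)

/-- The difference operator with weights `b`. -/
def opS (b : ℕ → ℤ) : Op where
  toFun v := fun i => b i * (v (i + 1) - v i)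
  map_add' x y := by funext i; simp only [Pi.add_apply]; ring
  map_smul' c x := by funext i; simp only [Pi.smul_apply, smul_eq_mul, RingHom.id_apply]; ring

theorem opS_apply (b v : ℕ → ℤ) (i : ℕ) : opS b v i = b i * (v (i + 1) - v i) := rfl

/-- The intertwining operator. -/
def opP (s : ℕ) (x y : ℤ) : Op where
  toFun v := fun i => if i = s + 1 then x * v i + (y - x) * v (i - 1) else y * v i
  map_add' u v := by funext i; simp only [Pi.add_apply]; split_ifs <;> ring
  map_smul' c v := by
    funext i; simp only [Pi.smul_apply, smul_eq_mul, RingHom.id_apply]; split_ifs <;> ring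

theorem opP_apply (s : ℕ) (x y : ℤ) (v : ℕ → ℤ) (i : ℕ) : opP s x y v i =
    if i = s + 1 then x * v i + (y - x) * v (i - 1) else y * v i := rfl

open BinaryTree in
/-- The number of trees with `n - 1` nodes that are critical for `σ`. -/
noncomputable def beta (σ : List ℕ) : ℕ → ℤ
  | 0 => 0
  | n + 1 => ∑ t ∈ treesOfNumNodesEq n, crit σ (enc t)

open BinaryTree in
noncomputable def gW (L : List (List ℕ)) : PowerSeries Op :=
  PowerSeries.mk fun n => ∑ t ∈ treesOfNumNodesEq n, opM L (enc t)

open BinaryTree in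
noncomputable def cW (L : List (List ℕ)) : ℕ → Op
  | 0 => 0
  | n + 1 => ∑ t ∈ treesOfNumNodesEq n, opM L (enc t ++ [1])

noncomputable def gC (L : List (List ℕ)) : PowerSeries Op := PowerSeries.mk (cW L)

noncomputable def gS (L : List (List ℕ)) : PowerSeries Op :=
  PowerSeries.mk fun n => opS (fun i => beta (L.getD i []) n)

open BinaryTree in
noncomputable def gWp (L : List (List ℕ)) (p : ℕ) : PowerSeries Op :=
  PowerSeries.mk fun n => ∑ t ∈ treesOfNumNodesEq n, if spine t = p then opM L (enc t) else 0

open BinaryTree in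
theorem sum_trees_succ {M : Type*} [AddCommMonoid M] (n : ℕ) (g : BinaryTree Unit → M) :
    ∑ t ∈ treesOfNumNodesEq (n + 1), g t = ∑ ij ∈ Finset.HasAntidiagonal.antidiagonal n,
      ∑ a ∈ treesOfNumNodesEq ij.1, ∑ b ∈ treesOfNumNodesEq ij.2, g (.node () a b) := by
  rw [treesOfNumNodesEq_succ, Finset.sum_biUnion]
  · apply Finset.sum_congr rfl
    rintro ⟨i, j⟩ _
    rw [Finset.sum_map, Finset.sum_product]
    rfl
  · simp_rw [Set.PairwiseDisjoint, Set.Pairwise, Finset.disjoint_left]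
    aesop

theorem gW_eq {L : List (List ℕ)} (hL : ∀ c ∈ L, IsRGF c ∧ Connected c) :
    gW L = 1 + gC L * gW L := by
  ext1 n
  rw [map_add, PowerSeries.coeff_mul, PowerSeries.coeff_one]
  cases n with
  | zero => simp [gW, gC, cW, enc, opM_nil hL]
  | succ n =>
    rw [Finset.Nat.antidiagonal_succ, Finset.sum_cons, Finset.sum_map]
    simp only [gW, gC, PowerSeries.coeff_mk, sum_trees_succ]
    simp [cW, Finset.sum_mul_sum, enc, opM_comp hL _ _ (enc_isRGF _).1]

theorem gWp_zero {L : List (List ℕ)} (hL : ∀ c ∈ L, IsRGF c ∧ Connected c) : gWp L 0 = 1 := by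
  ext1 n
  rw [PowerSeries.coeff_one]
  cases n with
  | zero => simp [gWp, enc, opM_nil hL, spine]
  | succ n => simp [gWp, sum_trees_succ, spine]

theorem gWp_succ {L : List (List ℕ)} (hL : ∀ c ∈ L, IsRGF c ∧ Connected c) (p : ℕ) :
    gWp L (p + 1) = gC L * gWp L p := by
  ext1 n
  rw [PowerSeries.coeff_mul]
  cases n with
  | zero => simp [gWp, gC, cW, spine]
  | succ n =>
    rw [Finset.Nat.antidiagonal_succ, Finset.sum_cons, Finset.sum_map]
    simp only [gWp, gC, PowerSeries.coeff_mk, sum_trees_succ]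
    simp [cW, Finset.sum_mul_sum, enc, spine, opM_comp hL _ _ (enc_isRGF _).1]

theorem opS_sum {ι : Type*} (s : Finset ι) (b : ι → ℕ → ℤ) :
    opS (fun i => ∑ t ∈ s, b t i) = ∑ t ∈ s, opS (b t) := by
  ext1 v
  funext i
  rw [LinearMap.sum_apply, Finset.sum_apply, opS_apply, Finset.sum_mul]
  rfl

theorem gC_eq {L : List (List ℕ)} (hL : ∀ c ∈ L, IsRGF c ∧ Connected c) :
    gC L = PowerSeries.X * gW L + gS L := by
  ext1 n
  rw [map_add]
  cases n with
  | zero =>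
    have : opS (fun i => beta (L.getD i []) 0) = 0 := by
      ext1 v
      funext i
      rw [opS_apply]
      simp [beta]
    rw [PowerSeries.coeff_zero_X_mul]
    simp only [gC, gS, PowerSeries.coeff_mk, this, cW, add_zero]
  | succ n =>
    rw [PowerSeries.coeff_succ_X_mul]
    simp only [gC, gW, gS, PowerSeries.coeff_mk, cW, beta]
    rw [opS_sum, ← Finset.sum_add_distrib]
    apply Finset.sum_congr rfl
    intro t _
    ext1 v
    funext i
    rw [LinearMap.add_apply, Pi.add_apply, opM_apply, opM_apply, opS_apply,
      st_one hL _ (enc_isRGF t).1 i v]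

/-- Intertwining of solutions of the tree equation. -/
theorem intertwine {A : Type*} [Ring A] {W C S W' C' S' P : PowerSeries A}
    (h1 : W = 1 + C * W) (h2 : C = PowerSeries.X * W + S)
    (h1' : W' = 1 + C' * W') (h2' : C' = PowerSeries.X * W' + S')
    (h0 : PowerSeries.coeff 0 C' = 0) (hP : P * S = S' * P) : P * C = C' * P := by
  have hX : ∀ Q : PowerSeries A, Q * PowerSeries.X = PowerSeries.X * Q := fun Q =>
    (PowerSeries.commute_X Q).eq
  have hE : P * C - C' * P = PowerSeries.X * (P * W - W' * P) := by
    rw [h2, h2', mul_add, add_mul, hP, ← mul_assoc, hX, mul_sub, mul_assoc, mul_assoc]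
    abel
  have hD : P * W - W' * P =
      PowerSeries.X * ((P * W - W' * P) * W) + C' * (P * W - W' * P) := by
    rw [← mul_assoc, ← hE]
    conv_lhs => rw [h1, h1']
    noncomm_ring
  have hz : ∀ n, PowerSeries.coeff n (P * W - W' * P) = 0 := by
    generalize P * W - W' * P = D at hD
    intro n
    induction n using Nat.strong_induction_on with
    | _ n ih =>
      rw [hD, map_add]
      have a1 : PowerSeries.coeff n (C' * D) = 0 := by
        rw [PowerSeries.coeff_mul]
        apply Finset.sum_eq_zero
        rintro ⟨a, b⟩ hab
        rw [Finset.HasAntidiagonal.mem_antidiagonal] at hab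
        simp only at hab ⊢
        by_cases ha : a = 0
        · rw [ha, h0, zero_mul]
        · rw [ih b (by omega), mul_zero]
      rw [a1, add_zero]
      cases n with
      | zero => rw [PowerSeries.coeff_zero_X_mul]
      | succ n =>
        rw [PowerSeries.coeff_succ_X_mul, PowerSeries.coeff_mul]
        apply Finset.sum_eq_zero
        rintro ⟨a, b⟩ hab
        rw [Finset.HasAntidiagonal.mem_antidiagonal] at hab
        simp only at hab ⊢
        rw [ih a (by omega), zero_mul]
  have : P * W - W' * P = 0 := by ext1 n; rw [hz n]; simp
  rw [this, mul_zero] at hE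
  exact sub_eq_zero.1 hE

theorem intertwine_gWp {L L' : List (List ℕ)} (hL : ∀ c ∈ L, IsRGF c ∧ Connected c)
    (hL' : ∀ c ∈ L', IsRGF c ∧ Connected c) {P : PowerSeries Op} (hP : P * gS L = gS L' * P)
    (p : ℕ) : P * gWp L p = gWp L' p * P := by
  have h := intertwine (gW_eq hL) (gC_eq hL) (gW_eq hL') (gC_eq hL') (by simp [gC, cW]) hP
  induction p with
  | zero => rw [gWp_zero hL, gWp_zero hL', mul_one, one_mul]
  | succ p ih => rw [gWp_succ hL, gWp_succ hL', ← mul_assoc, h, mul_assoc, ih, mul_assoc]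

/-! ### Swapping two adjacent factors -/

theorem sum_antidiagonal_antisymm (n : ℕ) (g : ℕ → ℕ → ℤ) (h : ∀ a b, g a b + g b a = 0) :
    ∑ x ∈ Finset.HasAntidiagonal.antidiagonal n, g x.1 x.2 = 0 := by
  have h1 : ∑ x ∈ Finset.HasAntidiagonal.antidiagonal n, g x.1 x.2 =
      ∑ x ∈ Finset.HasAntidiagonal.antidiagonal n, g x.2 x.1 :=
    (Finset.Nat.sum_antidiagonal_swap (f := fun x : ℕ × ℕ => g x.1 x.2)).symm
  have h2 : ∑ x ∈ Finset.HasAntidiagonal.antidiagonal n, (g x.1 x.2 + g x.2 x.1) = 0 :=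
    Finset.sum_eq_zero fun x _ => h _ _
  rw [Finset.sum_add_distrib] at h2
  omega

/-- The intertwiner of `gS L` and `gS L'`. -/
theorem gP_comm (L L' : List (List ℕ)) (s : ℕ) (σ τ : List ℕ)
    (h1 : L.getD s [] = σ) (h2 : L.getD (s + 1) [] = τ)
    (h1' : L'.getD s [] = τ) (h2' : L'.getD (s + 1) [] = σ)
    (h : ∀ i, i ≠ s → i ≠ s + 1 → L.getD i [] = L'.getD i []) :
    (PowerSeries.mk fun n => opP s (beta σ n) (beta τ n)) * gS L =
      gS L' * PowerSeries.mk fun n => opP s (beta σ n) (beta τ n) := by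
  ext1 n
  rw [PowerSeries.coeff_mul, PowerSeries.coeff_mul]
  simp only [gS, PowerSeries.coeff_mk]
  ext1 v
  funext i
  rw [LinearMap.sum_apply, LinearMap.sum_apply, Finset.sum_apply, Finset.sum_apply,
    ← sub_eq_zero, ← Finset.sum_sub_distrib]
  simp only [Module.End.mul_apply, opP_apply, opS_apply]
  by_cases c1 : i = s
  · subst c1
    have e1 : ¬ (i = i + 1) := by omega
    simp only [e1, if_false, if_true, h1, h1', Nat.add_sub_cancel]
    exact sum_antidiagonal_antisymm n (fun a b =>
      beta τ a * (beta σ b * (v (i + 1) - v i)) -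
        beta τ a * (beta σ b * v (i + 1) + (beta τ b - beta σ b) * v i - beta τ b * v i))
      (fun a b => by ring)
  by_cases c2 : i = s + 1
  · subst c2
    have e1 : ¬ (s + 1 + 1 = s + 1) := by omega
    simp only [e1, if_false, if_true, h1, h2, h2', Nat.add_sub_cancel]
    exact sum_antidiagonal_antisymm n (fun a b =>
      beta σ a * (beta τ b * (v (s + 1 + 1) - v (s + 1))) +
        (beta τ a - beta σ a) * (beta σ b * (v (s + 1) - v s)) -
        beta σ a * (beta τ b * v (s + 1 + 1) -
          (beta σ b * v (s + 1) + (beta τ b - beta σ b) * v s)))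
      (fun a b => by ring)
  have e1 : ¬ (i + 1 = s + 1) := by omega
  simp only [e1, c2, if_false, h i c1 c2]
  exact sum_antidiagonal_antisymm n (fun a b =>
    beta τ a * (beta (L'.getD i []) b * (v (i + 1) - v i)) -
      beta (L'.getD i []) a * (beta τ b * v (i + 1) - beta τ b * v i))
    (fun a b => by ring)

/-- Indicator function of the non-final states. -/
def ind (k : ℕ) : ℕ → ℤ := fun i => if i < k then 1 else 0

open Classical BinaryTree in
theorem count_eq (L : List (List ℕ)) (n p : ℕ) :
    PowerSeries.coeff n (gWp L p) (ind L.length) 0 = (ncCount n p (wfold L) : ℤ) := by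
  rw [ncCount_eq, gWp, PowerSeries.coeff_mk, LinearMap.sum_apply, Finset.sum_apply,
    Finset.card_filter, Nat.cast_sum]
  apply Finset.sum_congr rfl
  intro t _
  have key : st L (enc t) 0 < L.length ↔ ¬ PatContains (enc t) (wfold L) := by
    have := le_st_iff (L := L) (enc t) (Nat.zero_le _) le_rfl
    rw [← not_le, this, Rch, seg]
    simp
  by_cases h1 : spine t = p
  · simp only [h1, if_true, true_and, opM_apply, ind, key]
    split_ifs <;> simp
  · simp [h1]

theorem swap_aux (L L' : List (List ℕ)) (hL : ∀ c ∈ L, IsRGF c ∧ Connected c)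
    (hL' : ∀ c ∈ L', IsRGF c ∧ Connected c) (s : ℕ) (σ τ : List ℕ)
    (hs : s + 1 < L.length) (hlen : L'.length = L.length)
    (h1 : L.getD s [] = σ) (h2 : L.getD (s + 1) [] = τ)
    (h1' : L'.getD s [] = τ) (h2' : L'.getD (s + 1) [] = σ)
    (h : ∀ i, i ≠ s → i ≠ s + 1 → L.getD i [] = L'.getD i [])
    (hτ : beta τ ≠ 0) : ccEquiv (wfold L) (wfold L') := by
  intro n p
  have hc := intertwine_gWp hL hL' (gP_comm L L' s σ τ h1 h2 h1' h2' h) p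
  have hl : ∀ (a : ℕ) (x : Op), (opP s (beta σ a) (beta τ a) * x) (ind L.length) 0 =
      beta τ a * x (ind L.length) 0 := by
    intro a x
    rw [Module.End.mul_apply, opP_apply, if_neg (by omega)]
  have hr : ∀ (a : ℕ) (x : Op), (x * opP s (beta σ a) (beta τ a)) (ind L.length) 0 =
      x (ind L.length) 0 * beta τ a := by
    intro a x
    have : opP s (beta σ a) (beta τ a) (ind L.length) = beta τ a • ind L.length := by
      funext i
      rw [opP_apply, Pi.smul_apply, smul_eq_mul]
      split_ifs with hi
      · subst hi
        have : s < L.length := by omega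
        simp [ind, hs, this]
      · rfl
    rw [Module.End.mul_apply, this, map_smul, Pi.smul_apply, smul_eq_mul, mul_comm]
  have key : (PowerSeries.mk (beta τ)) * PowerSeries.mk (fun n => (ncCount n p (wfold L) : ℤ)) =
      (PowerSeries.mk (beta τ)) * PowerSeries.mk (fun n => (ncCount n p (wfold L') : ℤ)) := by
    rw [mul_comm (PowerSeries.mk (beta τ)) (PowerSeries.mk (fun n => (ncCount n p (wfold L') : ℤ)))]
    ext m
    have hm := congrArg (fun y : Op => y (ind L.length) 0) (congrArg (PowerSeries.coeff m) hc)
    simp only [PowerSeries.coeff_mul, PowerSeries.coeff_mk, LinearMap.sum_apply, Finset.sum_apply,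
      hl, hr, count_eq] at hm
    simp only [PowerSeries.coeff_mul, PowerSeries.coeff_mk]
    rw [hm]
    apply Finset.sum_congr rfl
    intro x _
    rw [← hlen, count_eq]
  have hne : PowerSeries.mk (beta τ) ≠ 0 := by
    intro h0
    apply hτ
    funext m
    have := congrArg (PowerSeries.coeff m) h0
    simpa using this
  have := congrArg (PowerSeries.coeff n) (mul_left_cancel₀ hne key)
  simpa using this

theorem swap_cc (A B : List (List ℕ)) (σ τ : List ℕ)
    (hL : ∀ c ∈ A ++ σ :: τ :: B, IsRGF c ∧ Connected c) :
    ccEquiv (wfold (A ++ σ :: τ :: B)) (wfold (A ++ τ :: σ :: B)) := by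
  have hL' : ∀ c ∈ A ++ τ :: σ :: B, IsRGF c ∧ Connected c := by
    intro c hc
    apply hL
    simp only [List.mem_append, List.mem_cons] at hc ⊢
    tauto
  have g1 : ∀ σ τ, (A ++ σ :: τ :: B).getD A.length [] = σ := by
    intro σ τ; simp [List.getD_append_right]
  have g2 : ∀ σ τ, (A ++ σ :: τ :: B).getD (A.length + 1) [] = τ := by
    intro σ τ; simp [List.getD_append_right]
  have g3 : ∀ σ τ : List ℕ, ∀ i, i ≠ A.length → i ≠ A.length + 1 →
      (A ++ σ :: τ :: B).getD i [] = (A ++ τ :: σ :: B).getD i [] := by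
    intro σ τ i h1 h2
    by_cases hi : i < A.length
    · rw [List.getD_append _ _ _ _ hi, List.getD_append _ _ _ _ hi]
    · obtain ⟨j, rfl⟩ : ∃ j, i = A.length + (j + 2) := ⟨i - A.length - 2, by omega⟩
      rw [List.getD_append_right _ _ _ _ (by omega), List.getD_append_right _ _ _ _ (by omega)]
      have : A.length + (j + 2) - A.length = j + 2 := by omega
      rw [this]
      simp
  by_cases hτ : beta τ = 0
  · by_cases hσ : beta σ = 0
    · have hS : gS (A ++ σ :: τ :: B) = gS (A ++ τ :: σ :: B) := by
        simp only [gS]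
        congr 1
        funext n
        congr 1
        funext i
        by_cases c1 : i = A.length
        · rw [c1, g1, g1, hσ, hτ]
        by_cases c2 : i = A.length + 1
        · rw [c2, g2, g2, hσ, hτ]
        rw [g3 σ τ i c1 c2]
      intro n p
      have := intertwine_gWp hL hL' (P := 1) (by rw [hS, one_mul, mul_one]) p
      rw [one_mul, mul_one] at this
      have e1 := count_eq (A ++ σ :: τ :: B) n p
      have e2 := count_eq (A ++ τ :: σ :: B) n p
      have e3 : (A ++ σ :: τ :: B).length = (A ++ τ :: σ :: B).length := by simp
      rw [this, e3, e2] at e1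
      exact_mod_cast e1.symm
    · intro n p
      exact (swap_aux _ _ hL' hL A.length τ σ (by simp) (by simp) (g1 _ _) (g2 _ _) (g1 _ _)
        (g2 _ _) (g3 _ _) hσ n p).symm
  · exact swap_aux _ _ hL hL' A.length σ τ (by simp) (by simp) (g1 _ _) (g2 _ _) (g1 _ _)
      (g2 _ _) (g3 _ _) hτ

theorem perm_cc {L L' : List (List ℕ)} (h : L.Perm L') : ∀ A : List (List ℕ),
    (∀ c ∈ A ++ L, IsRGF c ∧ Connected c) → ccEquiv (wfold (A ++ L)) (wfold (A ++ L')) := by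
  induction h with
  | nil => intro A _ n p; rfl
  | cons x h ih =>
    intro A hA
    have := ih (A ++ [x]) (by simpa using hA)
    simpa using this
  | swap x y l => intro A hA; exact swap_cc A l y x hA
  | trans h1 h2 ih1 ih2 =>
    intro A hA n p
    refine (ih1 A hA n p).trans (ih2 A ?_ n p)
    intro c hc
    apply hA
    rcases List.mem_append.1 hc with hc | hc
    · exact List.mem_append_left _ hc
    · exact List.mem_append_right _ (h1.mem_iff.2 hc)

theorem wfold_flatten (M : List (List (List ℕ))) : wfold M.flatten = wfold (M.map wfold) := by
  induction M with
  | nil => rfl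
  | cons a M ih => rw [List.flatten_cons, wfold_append, ih, List.map_cons, wfold_cons]

/-- Theorem 3.4: permuting the factors of `σ₁[σ₂]⋯[σ_k]` yields a cc-equivalent
pattern. -/
theorem stmt8 (k : ℕ) (σ : Fin k → List ℕ)
    (h : ∀ i, IsRGF (σ i) ∧ NonCrossing (σ i)) (p : Equiv.Perm (Fin k)) :
    ccEquiv ((List.ofFn σ).foldr rgfComp [])
      ((List.ofFn (fun i => σ (p i))).foldr rgfComp []) := by
  have hx : ∀ i, ∃ L : List (List ℕ), (∀ c ∈ L, IsRGF c ∧ Connected c) ∧ wfold L = σ i :=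
    fun i => exists_components _ (h i).1
  choose F hF hF2 using hx
  have e : ∀ q : Fin k → Fin k, (List.ofFn (fun i => σ (q i))).foldr rgfComp [] =
      wfold (List.ofFn (fun i => F (q i))).flatten := by
    intro q
    rw [wfold_flatten, List.map_ofFn]
    have : (wfold ∘ fun i => F (q i)) = fun i => σ (q i) := by
      funext i; exact hF2 (q i)
    rw [this]
    rfl
  have e1 := e id
  simp only [id] at e1
  rw [e1, e p]
  have hp : (List.ofFn (fun i => F i)).flatten.Perm (List.ofFn (fun i => F (p i))).flatten :=
    (Equiv.Perm.ofFn_comp_perm p (fun i => F i)).symm.flatten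
  have := perm_cc hp [] (by
    intro c hc
    simp only [List.nil_append, List.mem_flatten, List.mem_ofFn] at hc
    obtain ⟨l, ⟨i, rfl⟩, hc⟩ := hc
    exact hF i c hc)
  simpa using this
end

section
/- Let σ₁,…,σ_k be non-crossing RGFs and let q < k be an index such that σ_q is either empty, or connected, or has all letters distinct (i.e., all its blocks are singletons). Then the pattern σ = 1[σ₁]1[σ₂]1⋯1[σ_{q−1}]1[σ_q]1[σ_{q+1}]1[σ_{q+2}]1⋯1[σ_k]1 is cc-equivalent to the pattern σ′ = 1[σ₁]1[σ₂]1⋯1[σ_{q−1}]1[σ_{q+1}]1[σ_q]1[σ_{q+2}]1⋯1[σ_k]1 obtained by swapping σ_q and σ_{q+1}. -/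
namespace S9

/-! ### Part 1: permutation-preserving bijections on lists -/

def Mul {α : Type} (U V : List α → Prop) (l : List α) : Prop :=
  ∃ l1 l2, l = l1 ++ l2 ∧ U l1 ∧ V l2

def LM {α : Type} (C : List α → Prop) : Prop := ∀ l1 l2, C l2 → C (l1 ++ l2)
def RM {α : Type} (C : List α → Prop) : Prop := ∀ l1 l2, C l1 → C (l1 ++ l2)

/-- precomposition with reversal -/
def Rv {α : Type} (C : List α → Prop) (l : List α) : Prop := C l.reverse

def E {α : Type} (S : α → Prop) (C D : List α → Prop) : Prop :=
  ∃ F : List α ≃ List α, (∀ l, (F l).Perm l) ∧ ∀ l, (∀ x ∈ l, S x) → (C l ↔ D (F l))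

theorem E.trans {α : Type} {S : α → Prop} {C D G : List α → Prop} (h1 : E S C D) (h2 : E S D G) :
    E S C G := by
  obtain ⟨F, hF, h⟩ := h1
  obtain ⟨F', hF', h'⟩ := h2
  refine ⟨F.trans F', fun l => (hF' _).trans (hF l), fun l hl => ?_⟩
  rw [h l hl, h' (F l) (fun x hx => hl x ((hF l).mem_iff.1 hx))]
  rfl

theorem E.of_iff {α : Type} {S : α → Prop} {C D : List α → Prop}
    (h : ∀ l, (∀ x ∈ l, S x) → (C l ↔ D l)) : E S C D :=
  ⟨Equiv.refl _, fun _ => List.Perm.refl _, h⟩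

theorem E.rev {α : Type} (S : α → Prop) (C : List α → Prop) : E S C (Rv C) :=
  ⟨⟨List.reverse, List.reverse, List.reverse_reverse, List.reverse_reverse⟩,
    fun l => List.reverse_perm l, fun l _ => by simp [Rv]⟩

theorem Rv_Rv {α : Type} (C : List α → Prop) : Rv (Rv C) = C := by
  funext l; simp [Rv]

theorem Rv_Mul {α : Type} (U V : List α → Prop) : Rv (Mul U V) = Mul (Rv V) (Rv U) := by
  funext l
  apply propext
  constructor
  · rintro ⟨l1, l2, h, h1, h2⟩
    refine ⟨l2.reverse, l1.reverse, ?_, by simpa [Rv] using h2, by simpa [Rv] using h1⟩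
    rw [← List.reverse_append, ← h, List.reverse_reverse]
  · rintro ⟨l1, l2, h, h1, h2⟩
    exact ⟨l2.reverse, l1.reverse, by simp [h], h2, h1⟩

theorem Mul_assoc {α : Type} (U V W : List α → Prop) : Mul (Mul U V) W = Mul U (Mul V W) := by
  funext l
  apply propext
  constructor
  · rintro ⟨_, l3, rfl, ⟨l1, l2, rfl, h1, h2⟩, h3⟩
    exact ⟨l1, l2 ++ l3, by simp, h1, l2, l3, rfl, h2, h3⟩
  · rintro ⟨l1, _, rfl, h1, l2, l3, rfl, h2, h3⟩
    exact ⟨l1 ++ l2, l3, by simp, ⟨l1, l2, rfl, h1, h2⟩, h3⟩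

theorem RM.Rv {α : Type} {C : List α → Prop} (h : RM C) : LM (Rv C) := by
  intro l1 l2 h2
  simp only [S9.Rv, List.reverse_append] at *
  exact h _ _ h2

theorem LM.Mul {α : Type} {U V : List α → Prop} (h : LM U) : LM (Mul U V) := by
  rintro l0 _ ⟨l1, l2, rfl, h1, h2⟩
  exact ⟨l0 ++ l1, l2, by simp, h _ _ h1, h2⟩

theorem RM.Mul {α : Type} {U V : List α → Prop} (h : RM V) : RM (Mul U V) := by
  rintro _ l0 ⟨l1, l2, rfl, h1, h2⟩
  exact ⟨l1, l2 ++ l0, by simp, h1, h _ _ h2⟩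

open Classical in
noncomputable def Gf {α : Type} (F : List α → List α) : List α → (List α → Prop) → List α
  | [], U => if U [] then F [] else []
  | x :: xs, U => if U [] then F (x :: xs) else x :: Gf F xs (fun l => U (x :: l))

theorem Gf_perm {α : Type} (F : List α → List α) (hF : ∀ l, (F l).Perm l) (l : List α) :
    ∀ U, (Gf F l U).Perm l := by
  induction l with
  | nil => intro U; unfold Gf; split_ifs <;> simp [hF]
  | cons x xs ih => intro U; unfold Gf; split_ifs <;> simp [hF, ih]

theorem Gf_inv {α : Type} (F F' : List α → List α) (h : ∀ l, F' (F l) = l)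
    (l : List α) :
    ∀ U, Gf F' (Gf F l U) U = l := by
  have key : ∀ l (U : List α → Prop), U [] → ∀ F : List α → List α, Gf F l U = F l := by
    intro l U hU F
    cases l <;> simp [Gf, hU]
  induction l with
  | nil =>
    intro U
    by_cases hU : U []
    · rw [key _ _ hU, key _ _ hU, h]
    · simp [Gf, hU]
  | cons x xs ih =>
    intro U
    by_cases hU : U []
    · rw [key _ _ hU, key _ _ hU, h]
    · simp [Gf, hU, ih]

theorem Gf_spec {α : Type} (S : α → Prop) (F : List α → List α) (C D : List α → Prop)
    (hC : LM C) (hD : LM D)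
    (h : ∀ l, (∀ x ∈ l, S x) → (C l ↔ D (F l))) (l : List α) :
    ∀ U, (∀ x ∈ l, S x) → (Mul U C l ↔ Mul U D (Gf F l U)) := by
  have key : ∀ l (U : List α → Prop), U [] → ∀ C : List α → Prop, LM C → (Mul U C l ↔ C l) := by
    intro l U hU C hC
    constructor
    · rintro ⟨l1, l2, rfl, -, h2⟩
      exact hC _ _ h2
    · intro h
      exact ⟨[], l, rfl, hU, h⟩
  have key2 : ∀ x l (U : List α → Prop), ¬ U [] → ∀ C : List α → Prop,
      (Mul U C (x :: l) ↔ Mul (fun l => U (x :: l)) C l) := by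
    intro x l U hU C
    constructor
    · rintro ⟨l1, l2, h0, h1, h2⟩
      cases l1 with
      | nil => exact absurd h1 hU
      | cons y l1 =>
        simp only [List.cons_append, List.cons.injEq] at h0
        obtain ⟨rfl, rfl⟩ := h0
        exact ⟨l1, l2, rfl, h1, h2⟩
    · rintro ⟨l1, l2, rfl, h1, h2⟩
      exact ⟨x :: l1, l2, rfl, h1, h2⟩
  induction l with
  | nil =>
    intro U hl
    by_cases hU : U []
    · rw [key _ _ hU _ hC, key _ _ hU _ hD, h _ hl]
      simp [Gf, hU]
    · simp [Gf, hU, Mul]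
  | cons x xs ih =>
    intro U hl
    by_cases hU : U []
    · rw [key _ _ hU _ hC, key _ _ hU _ hD, h _ hl]
      simp [Gf, hU]
    · simp only [Gf, hU, if_false]
      rw [key2 _ _ _ hU, key2 _ _ _ hU]
      exact ih _ (fun y hy => hl y (by simp [hy]))

theorem E.left {α : Type} {S : α → Prop} {C D : List α → Prop} (h : E S C D) (hC : LM C) (hD : LM D)
    (U : List α → Prop) : E S (S9.Mul U C) (S9.Mul U D) := by
  obtain ⟨F, hF, h⟩ := h
  refine ⟨⟨fun l => Gf F l U, fun l => Gf F.symm l U, ?_, ?_⟩, ?_, ?_⟩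
  · intro l; exact Gf_inv _ _ (by simp) l U
  · intro l; exact Gf_inv _ _ (by simp) l U
  · intro l; exact Gf_perm _ hF l U
  · intro l hl; exact Gf_spec S F C D hC hD h l U hl

/-- the key swap -/
theorem E.swap {α : Type} {S : α → Prop} {A B V : List α → Prop}
    (hArev : ∀ l, (∀ x ∈ l, S x) → (A l ↔ A l.reverse))
    (hAr : RM A) (hBl : LM B) (hBr : RM B) :
    E S (S9.Mul A (S9.Mul B V)) (S9.Mul B (S9.Mul A V)) := by
  -- swap without V
  have h1 : E S (S9.Mul A B) (S9.Mul B A) := by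
    have e1 : E S (S9.Mul A B) (S9.Mul A (S9.Rv B)) := (E.rev S B).left hBl hBr.Rv A
    have e2 := E.rev S (S9.Mul A (S9.Rv B))
    rw [Rv_Mul, Rv_Rv] at e2
    refine (e1.trans e2).trans (E.of_iff ?_)
    intro l hl
    constructor
    · rintro ⟨l1, l2, rfl, h1, h2⟩
      exact ⟨l1, l2, rfl, h1, (hArev _ (fun x hx => hl x (by simp [hx]))).2 h2⟩
    · rintro ⟨l1, l2, rfl, h1, h2⟩
      exact ⟨l1, l2, rfl, h1, (hArev _ (fun x hx => hl x (by simp [hx]))).1 h2⟩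
  rw [← Mul_assoc, ← Mul_assoc]
  have r1 := E.rev S (S9.Mul (S9.Mul A B) V)
  rw [Rv_Mul] at r1
  have r2 : E S (S9.Mul (S9.Rv V) (S9.Rv (S9.Mul B A))) (S9.Mul (S9.Mul B A) V) := by
    have := E.rev S (S9.Mul (S9.Rv V) (S9.Rv (S9.Mul B A)))
    rwa [Rv_Mul (S9.Rv V), Rv_Rv, Rv_Rv] at this
  have m : E S (S9.Rv (S9.Mul A B)) (S9.Rv (S9.Mul B A)) := by
    have a1 := E.rev S (S9.Rv (S9.Mul A B))
    rw [Rv_Rv] at a1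
    exact (a1.trans h1).trans (E.rev S _)
  exact (r1.trans (m.left (RM.Mul hBr).Rv (RM.Mul hAr).Rv _)).trans r2

end S9

namespace S9

/-! ### Part 2: restricted growth words -/

def RG : ℕ → List ℕ → Prop
  | _, [] => True
  | m, x :: xs => 1 ≤ x ∧ x ≤ m + 1 ∧ RG (max m x) xs

theorem RG_iff (w : List ℕ) : ∀ m, RG m w ↔ (∀ x ∈ w, 1 ≤ x) ∧
    ∀ i, i < w.length → w.getD i 0 ≤ max m ((w.take i).foldr max 0) + 1 := by
  induction w with
  | nil => intro m; simp [RG]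
  | cons x xs ih =>
    intro m
    simp only [RG, ih]
    constructor
    · rintro ⟨h1, h2, h3, h4⟩
      refine ⟨by simpa using ⟨h1, h3⟩, ?_⟩
      intro i hi
      cases i with
      | zero => simpa using h2
      | succ i =>
        have := h4 i (by simpa using hi)
        simpa [max_assoc] using this
    · rintro ⟨h1, h2⟩
      simp only [List.mem_cons, forall_eq_or_imp] at h1
      refine ⟨h1.1, by simpa using h2 0 (by simp), h1.2, ?_⟩
      intro i hi
      simpa [max_assoc] using h2 (i + 1) (by simpa using hi)

theorem isRGF_iff (w : List ℕ) : IsRGF w ↔ RG 0 w := by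
  rw [RG_iff]
  constructor
  · rintro ⟨h1, h2, h3⟩
    refine ⟨h1, fun i hi => ?_⟩
    cases i with
    | zero =>
      have := h2 (by rintro rfl; simp at hi)
      rw [this]; simp
    | succ i => simpa using h3 i hi
  · rintro ⟨h1, h2⟩
    refine ⟨h1, fun hw => ?_, fun i hi => ?_⟩
    · cases w with
      | nil => simp at hw
      | cons x xs =>
        have a := h1 x (by simp)
        have b := h2 0 (by simp)
        simp at b ⊢
        omega
    · simpa using h2 (i + 1) hi

theorem nL_nil : nLetters [] = 0 := rfl
theorem nL_cons (x : ℕ) (w : List ℕ) : nLetters (x :: w) = max x (nLetters w) := rfl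

theorem nL_append (u v : List ℕ) : nLetters (u ++ v) = max (nLetters u) (nLetters v) := by
  induction u with
  | nil => simp [nL_nil]
  | cons x u ih => simp [nL_cons, ih, max_assoc]

theorem le_nL {w : List ℕ} {x : ℕ} (h : x ∈ w) : x ≤ nLetters w := by
  induction w with
  | nil => simp at h
  | cons y w ih =>
    rw [nL_cons]
    rcases List.mem_cons.1 h with rfl | h
    · simp
    · exact le_max_of_le_right (ih h)

theorem nL_le {w : List ℕ} {m : ℕ} (h : ∀ x ∈ w, x ≤ m) : nLetters w ≤ m := by
  induction w with
  | nil => simp [nL_nil]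
  | cons y w ih =>
    rw [nL_cons]
    exact max_le (h y (by simp)) (ih (fun x hx => h x (by simp [hx])))

theorem nL_shift (w : List ℕ) (s : ℕ) : max s (nLetters (w.map (· + s))) = s + nLetters w := by
  induction w with
  | nil => simp [nL_nil]
  | cons y w ih => simp only [List.map_cons, nL_cons]; omega

theorem nL_comp (a b : List ℕ) : nLetters (rgfComp a b) = nLetters a + nLetters b := by
  rw [rgfComp, nL_append, nL_shift]

theorem RG_append (u v : List ℕ) : ∀ m, RG m (u ++ v) ↔ RG m u ∧ RG (max m (nLetters u)) v := by
  induction u with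
  | nil => intro m; simp [RG, nL_nil]
  | cons x u ih => intro m; simp [RG, ih, nL_cons, and_assoc, max_assoc]

theorem RG_mem {w : List ℕ} : ∀ {m x : ℕ}, RG m w → m < x → x ≤ nLetters w → x ∈ w := by
  induction w with
  | nil => intro m x _ h1 h2; simp [nL_nil] at h2; omega
  | cons y w ih =>
    intro m x h h1 h2
    obtain ⟨a, b, c⟩ := h
    by_cases hx : x = y
    · simp [hx]
    · refine List.mem_cons_of_mem _ (ih c (by omega) ?_)
      rw [nL_cons] at h2; omega

theorem RG_pos {w : List ℕ} : ∀ {m : ℕ}, RG m w → ∀ x ∈ w, 1 ≤ x := fun {m} h => ((RG_iff w m).1 h).1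

theorem RG_unshift {v : List ℕ} (m : ℕ) : ∀ k, RG (m + k) v → (∀ x ∈ v, m < x) →
    RG k (v.map (· - m)) := by
  induction v with
  | nil => intros; simp [RG]
  | cons y v ih =>
    intro k h hx
    obtain ⟨a, b, c⟩ := h
    have := hx y (by simp)
    refine ⟨by simp only; omega, by simp only; omega, ih _ ?_ (fun x h => hx x (by simp [h]))⟩
    convert c using 1; simp only; omega

theorem RG_exists_unshift {v : List ℕ} {m : ℕ} (h : RG m v) (hx : ∀ x ∈ v, m < x) :
    ∃ v', RG 0 v' ∧ v = v'.map (· + m) := by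
  refine ⟨v.map (· - m), RG_unshift m 0 (by simpa using h) hx, ?_⟩
  rw [List.map_map]
  symm
  apply (List.map_congr_left _).trans (List.map_id _)
  intro x h
  have := hx x h
  simp; omega

theorem RG_shift {v : List ℕ} (m : ℕ) : ∀ k, RG k v → RG (m + k) (v.map (· + m)) := by
  induction v with
  | nil => intros; simp [RG]
  | cons y v ih =>
    intro k h
    obtain ⟨a, b, c⟩ := h
    refine ⟨by simp only; omega, by simp only; omega, ?_⟩
    convert ih _ c using 1; simp only; omega

theorem RG_comp {a b : List ℕ} (ha : RG 0 a) (hb : RG 0 b) : RG 0 (rgfComp a b) := by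
  rw [rgfComp, RG_append]
  refine ⟨ha, ?_⟩
  simpa using RG_shift (nLetters a) 0 hb

/-! ### joins -/

def join (l : List (List ℕ)) : List ℕ := l.foldr rgfComp []

theorem join_nil : join [] = [] := rfl
theorem join_cons (c : List ℕ) (l : List (List ℕ)) :
    join (c :: l) = c ++ (join l).map (· + nLetters c) := rfl

theorem nL_join_cons (c : List ℕ) (l : List (List ℕ)) :
    nLetters (join (c :: l)) = nLetters c + nLetters (join l) := nL_comp _ _

theorem nL_join (l : List (List ℕ)) : nLetters (join l) = (l.map nLetters).sum := by
  induction l with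
  | nil => rfl
  | cons c l ih => rw [nL_join_cons, ih]; simp

theorem join_append (l1 l2 : List (List ℕ)) :
    join (l1 ++ l2) = join l1 ++ (join l2).map (· + nLetters (join l1)) := by
  induction l1 with
  | nil => simp [join_nil, nL_nil]
  | cons c l ih =>
    rw [List.cons_append, join_cons, ih, nL_join_cons, join_cons]
    simp [Function.comp_def, add_comm, add_left_comm]

theorem RG_join {l : List (List ℕ)} (h : ∀ c ∈ l, RG 0 c) : RG 0 (join l) := by
  induction l with
  | nil => simp [join_nil, RG]
  | cons c l ih =>
    exact RG_comp (h c (by simp)) (ih (fun x hx => h x (by simp [hx])))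

theorem join_pos {l : List (List ℕ)} (h : ∀ c ∈ l, ∀ x ∈ c, 1 ≤ x) : ∀ x ∈ join l, 1 ≤ x := by
  induction l with
  | nil => simp [join_nil]
  | cons c l ih =>
    intro x hx
    rw [join_cons, List.mem_append, List.mem_map] at hx
    rcases hx with hx | ⟨y, hy, rfl⟩
    · exact h c (by simp) x hx
    · have := ih (fun c hc => h c (by simp [hc])) y hy
      omega

theorem length_join (l : List (List ℕ)) : (join l).length = (l.map List.length).sum := by
  induction l with
  | nil => rfl
  | cons c l ih => rw [join_cons]; simp [ih]

theorem length_onePatAux (l : List (List ℕ)) : ∀ s,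
    (onePatAux s l).length = 1 + l.length + (l.map List.length).sum := by
  induction l with
  | nil => intro s; rfl
  | cons c l ih => intro s; simp [onePatAux, ih]; omega

/-! ### containment through strictly monotone letter maps -/

def SM (f : ℕ → ℕ) (p : List ℕ) : Prop := ∀ x ∈ p, ∀ y ∈ p, x < y → f x < f y

theorem SM.lt {f : ℕ → ℕ} {p : List ℕ} (h : SM f p) {x y : ℕ} (hx : x ∈ p) (hy : y ∈ p)
    (hxy : f x < f y) : x < y := by
  by_contra hc
  rcases lt_or_eq_of_le (not_lt.1 hc) with h1 | h1
  · have := h y hy x hx h1; omega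
  · subst h1; omega

theorem contains_iff (w p : List ℕ) : PatContains w p ↔ ∃ f : ℕ → ℕ, SM f p ∧ (p.map f).Sublist w := by
  constructor
  · rintro ⟨t, ht, hl, ho⟩
    have hf : ∀ i, i < p.length → t.getD (p.idxOf (p.getD i 0)) 0 = t.getD i 0 := by
      intro i hi
      have hm : p.getD i 0 ∈ p := by
        rw [List.getD_eq_getElem _ _ hi]; exact List.getElem_mem _
      have hj := List.idxOf_lt_length_iff.2 hm
      have e : p.getD (p.idxOf (p.getD i 0)) 0 = p.getD i 0 := by
        rw [List.getD_eq_getElem _ _ hj, List.getElem_idxOf]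
      have h1 := ho (p.idxOf (p.getD i 0)) i (by omega) (by omega)
      have h2 := ho i (p.idxOf (p.getD i 0)) (by omega) (by omega)
      rw [e] at h1 h2
      simp only [lt_self_iff_false, iff_false] at h1 h2
      omega
    refine ⟨fun x => t.getD (p.idxOf x) 0, ?_, ?_⟩
    · intro x hx y hy hxy
      have hi := List.idxOf_lt_length_iff.2 hx
      have hj := List.idxOf_lt_length_iff.2 hy
      refine (ho _ _ (by omega) (by omega)).2 ?_
      rw [List.getD_eq_getElem _ _ hi, List.getD_eq_getElem _ _ hj, List.getElem_idxOf,
        List.getElem_idxOf]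
      exact hxy
    · convert ht using 1
      apply List.ext_getElem
      · simp [hl]
      · intro i h1 h2
        simp only [List.length_map] at h1
        have := hf i h1
        rw [List.getD_eq_getElem _ _ h1, List.getD_eq_getElem _ _ h2] at this
        simpa using this
  · rintro ⟨f, hf, hs⟩
    refine ⟨_, hs, by simp, ?_⟩
    intro i j hi hj
    simp only [List.length_map] at hi hj
    have a : (p.map f).getD i 0 = f (p.getD i 0) := by
      rw [List.getD_eq_getElem _ _ hi, List.getD_eq_getElem _ _ (by simpa using hi)]; simp
    have b : (p.map f).getD j 0 = f (p.getD j 0) := by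
      rw [List.getD_eq_getElem _ _ hj, List.getD_eq_getElem _ _ (by simpa using hj)]; simp
    have am : p.getD i 0 ∈ p := by rw [List.getD_eq_getElem _ _ hi]; exact List.getElem_mem _
    have bm : p.getD j 0 ∈ p := by rw [List.getD_eq_getElem _ _ hj]; exact List.getElem_mem _
    rw [a, b]
    exact ⟨fun h => hf.lt am bm h, fun h => hf _ am _ bm h⟩

theorem contains_mono {w w' p : List ℕ} (h : w.Sublist w') (hp : PatContains w p) :
    PatContains w' p := by
  obtain ⟨t, ht, ho⟩ := hp
  exact ⟨t, ht.trans h, ho⟩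

theorem contains_shift (w p : List ℕ) (s : ℕ) : PatContains (w.map (· + s)) p ↔ PatContains w p := by
  rw [contains_iff, contains_iff]
  constructor
  · rintro ⟨f, hf, hs⟩
    have hm : ∀ x ∈ p, s ≤ f x := by
      intro x hx
      have := hs.subset (List.mem_map_of_mem (f := f) hx)
      rw [List.mem_map] at this
      obtain ⟨y, -, hy⟩ := this
      omega
    refine ⟨fun x => f x - s, fun x hx y hy hxy => ?_, ?_⟩
    · have := hf x hx y hy hxy
      have := hm x hx
      have := hm y hy
      simp only; omega
    · have := hs.map (· - s)
      simpa [Function.comp_def] using this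
  · rintro ⟨f, hf, hs⟩
    refine ⟨fun x => f x + s, fun x hx y hy hxy => ?_, ?_⟩
    · have := hf x hx y hy hxy; simp only; omega
    · simpa [Function.comp_def] using hs.map (· + s)

theorem contains_trans {w p q : List ℕ} (h1 : PatContains w p) (h2 : PatContains p q) :
    PatContains w q := by
  rw [contains_iff] at *
  obtain ⟨f, hf, hs⟩ := h1
  obtain ⟨g, hg, ht⟩ := h2
  refine ⟨fun x => f (g x), fun x hx y hy hxy => ?_, ?_⟩
  · exact hf _ (ht.subset (List.mem_map_of_mem hx)) _ (ht.subset (List.mem_map_of_mem hy))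
      (hg x hx y hy hxy)
  · have := (ht.map f).trans hs
    simpa [Function.comp_def] using this

/-! ### indecomposable patterns -/

def Indec (p : List ℕ) : Prop :=
  p ≠ [] ∧ ∀ p1 p2, p = p1 ++ p2 → p1 ≠ [] → p2 ≠ [] → ∃ x ∈ p1, ∃ y ∈ p2, y ≤ x

theorem join_contains_of_mem {l : List (List ℕ)} {c p : List ℕ} (hc : c ∈ l) (h : PatContains c p) :
    PatContains (join l) p := by
  obtain ⟨l1, l2, rfl⟩ := List.append_of_mem hc
  rw [join_append, join_cons]
  refine contains_mono (List.sublist_append_right _ _) ?_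
  rw [contains_shift]
  exact contains_mono (List.sublist_append_left _ _) h

theorem join_contains_iff {l : List (List ℕ)} {p : List ℕ} (hl : ∀ c ∈ l, ∀ x ∈ c, 1 ≤ x)
    (hp : Indec p) : PatContains (join l) p ↔ ∃ c ∈ l, PatContains c p := by
  constructor
  · induction l with
    | nil =>
      rintro ⟨t, ht, hl, -⟩
      rw [join_nil, List.sublist_nil] at ht
      subst ht
      exact absurd (List.length_eq_zero_iff.1 hl.symm) hp.1
    | cons c l ih =>
      intro h
      have h' := h
      rw [contains_iff] at h
      obtain ⟨f, hf, hs⟩ := h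
      rw [join_cons, List.sublist_append_iff] at hs
      obtain ⟨t1, t2, he, h1, h2⟩ := hs
      obtain ⟨p1, p2, rfl, rfl, rfl⟩ := List.map_eq_append_iff.1 he
      by_cases e1 : p1 = []
      · subst e1
        have : PatContains (join l) p2 := by
          rw [← contains_shift _ _ (nLetters c), contains_iff]
          exact ⟨f, hf, h2⟩
        obtain ⟨d, hd, hh⟩ := ih (fun c hc => hl c (by simp [hc])) this
        exact ⟨d, by simp [hd], hh⟩
      · by_cases e2 : p2 = []
        · subst e2
          refine ⟨c, by simp, ?_⟩
          rw [contains_iff]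
          exact ⟨f, hf, by simpa using h1⟩
        · exfalso
          obtain ⟨x, hx, y, hy, hxy⟩ := hp.2 p1 p2 rfl e1 e2
          have a := le_nL (h1.subset (List.mem_map_of_mem hx))
          have b := h2.subset (List.mem_map_of_mem (f := f) hy)
          rw [List.mem_map] at b
          obtain ⟨z, hz, hzy⟩ := b
          have hz1 : 1 ≤ z := join_pos (fun c hc => hl c (by simp [hc])) z hz
          have := hf.lt (by simp [hx]) (by simp [hy]) (show f x < f y by omega)
          omega
  · rintro ⟨c, hc, h⟩
    exact join_contains_of_mem hc h

end S9

namespace S9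

/-! ### Part 3: the words `onePat l` -/

def Pos (l : List (List ℕ)) : Prop := ∀ c ∈ l, ∀ x ∈ c, 1 ≤ x

theorem Pos.tail {c : List ℕ} {l : List (List ℕ)} (h : Pos (c :: l)) : Pos l :=
  fun d hd => h d (by simp [hd])

theorem onePatAux_head (l : List (List ℕ)) (s : ℕ) : ∃ t, onePatAux s l = 1 :: t := by
  cases l <;> exact ⟨_, rfl⟩

theorem onePatAux_last (l : List (List ℕ)) : ∀ s, ∃ t, onePatAux s l = t ++ [1] := by
  induction l with
  | nil => intro s; exact ⟨[], rfl⟩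
  | cons c l ih =>
    intro s
    obtain ⟨t, ht⟩ := ih (s + nLetters c)
    exact ⟨1 :: (c.map (· + s) ++ t), by simp [onePatAux, ht]⟩

theorem filter_onePatAux (l : List (List ℕ)) : ∀ s, 1 ≤ s → Pos l →
    (onePatAux s l).filter (fun x => decide (x ≠ 1)) = (join l).map (· + s) := by
  induction l with
  | nil => intro s _ _; simp [onePatAux, join_nil]
  | cons c l ih =>
    intro s hs hl
    have h1 : (c.map (· + s)).filter (fun x => decide (x ≠ 1)) = c.map (· + s) := by
      rw [List.filter_eq_self]
      intro x hx
      obtain ⟨y, hy, rfl⟩ := List.mem_map.1 hx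
      have := hl c (by simp) y hy
      simp; omega
    rw [onePatAux, List.filter_cons_of_neg (by simp), List.filter_append, h1,
      ih _ (by omega) hl.tail, join_cons]
    simp [Function.comp_def, add_comm, add_left_comm]

theorem mem_onePatAux {l : List (List ℕ)} {s : ℕ} (hs : 1 ≤ s) (hl : Pos l) {x : ℕ}
    (hx : x ∈ onePatAux s l) : x = 1 ∨ ∃ y ∈ join l, x = y + s := by
  by_cases h : x = 1
  · exact Or.inl h
  · right
    have : x ∈ (onePatAux s l).filter (fun x => decide (x ≠ 1)) := by simp [hx, h]
    rw [filter_onePatAux l s hs hl, List.mem_map] at this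
    obtain ⟨y, hy, rfl⟩ := this
    exact ⟨y, hy, rfl⟩

theorem RG_onePatAux (l : List (List ℕ)) : ∀ s, 1 ≤ s → (∀ c ∈ l, RG 0 c) →
    RG s (onePatAux s l) := by
  induction l with
  | nil => intro s hs _; simp [onePatAux, RG]
  | cons c l ih =>
    intro s hs hl
    refine ⟨le_rfl, by omega, ?_⟩
    rw [max_eq_left hs, RG_append, nL_shift]
    exact ⟨by simpa using RG_shift s 0 (hl c (by simp)),
      ih _ (by omega) (fun d hd => hl d (by simp [hd]))⟩

theorem RG_onePat {l : List (List ℕ)} (hl : ∀ c ∈ l, RG 0 c) : RG 0 (onePat l) := by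
  have := RG_onePatAux l 1 le_rfl hl
  unfold onePat
  obtain ⟨t, ht⟩ := onePatAux_head l 1
  rw [ht] at this ⊢
  obtain ⟨a, b, c⟩ := this
  exact ⟨a, by simp, by simpa using c⟩

theorem onePat_indec (l : List (List ℕ)) : Indec (onePat l) := by
  obtain ⟨t, ht⟩ := onePatAux_head l 1
  obtain ⟨t', ht'⟩ := onePatAux_last l 1
  refine ⟨by simp [onePat, ht], ?_⟩
  intro p1 p2 h h1 h2
  obtain ⟨x, q1, rfl⟩ := List.exists_cons_of_ne_nil h1
  refine ⟨x, by simp, 1, ?_, ?_⟩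
  · rcases List.eq_nil_or_concat' p2 with rfl | ⟨q2, y, rfl⟩
    · simp at h2
    · rw [onePat, ht', ← List.append_assoc] at h
      have := (List.append_inj' h rfl).2
      simp at this
      simp [this]
  · rw [onePat, ht] at h
    simp at h
    omega

theorem onePat_connected (l : List (List ℕ)) : Connected (onePat l) := by
  obtain ⟨t, ht⟩ := onePatAux_head l 1
  obtain ⟨t', ht'⟩ := onePatAux_last l 1
  refine ⟨by simp [onePat, ht], ?_⟩
  rintro ⟨a, b, ha, hb, h1, h2, h⟩
  rcases List.eq_nil_or_concat' b with rfl | ⟨q2, y, rfl⟩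
  · simp at h2
  · rw [onePat, ht', rgfComp, List.map_append, ← List.append_assoc] at h
    have := (List.append_inj' h rfl).2
    simp at this
    have hy := hb.1 y (by simp)
    obtain ⟨x, a, rfl⟩ := List.exists_cons_of_ne_nil h1
    have hx := ha.1 x (by simp)
    have := le_nL (show x ∈ x :: a by simp)
    omega

theorem indec_of_connected {a : List ℕ} (ha : RG 0 a) (hc : Connected a) : Indec a := by
  refine ⟨hc.1, ?_⟩
  intro p1 p2 h h1 h2
  by_contra hcon
  push Not at hcon
  subst h
  rw [RG_append] at ha
  have hlt : ∀ y ∈ p2, nLetters p1 < y := by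
    intro y hy
    by_contra hy'
    have := RG_mem ha.1 (x := nLetters p1) ?_ le_rfl
    · have := hcon _ this y hy; omega
    · obtain ⟨x, q, rfl⟩ := List.exists_cons_of_ne_nil h1
      have := ha.1.1
      have := le_nL (show x ∈ x :: q by simp)
      omega
  rw [Nat.zero_max] at ha
  obtain ⟨v, hv, rfl⟩ := RG_exists_unshift ha.2 hlt
  exact hc.2 ⟨p1, v, (isRGF_iff _).2 ha.1, (isRGF_iff _).2 hv, h1, by simpa using h2, rfl⟩

/-! ### the matching relation -/

def K (c : List ℕ) (l : List (List ℕ)) : Prop := l ≠ [] ∧ PatContains (join l) c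

theorem K_LM (c : List ℕ) : LM (K c) := by
  rintro l1 l2 ⟨h1, h2⟩
  refine ⟨by simp [h1], ?_⟩
  rw [join_append]
  refine contains_mono (List.sublist_append_right _ _) ?_
  rwa [contains_shift]

theorem K_RM (c : List ℕ) : RM (K c) := by
  rintro l1 l2 ⟨h1, h2⟩
  refine ⟨by simp [h1], ?_⟩
  rw [join_append]
  exact contains_mono (List.sublist_append_left _ _) h2

def Mt : List (List ℕ) → List (List ℕ) → Prop
  | [] => fun _ => True
  | c :: cs => Mul (K c) (Mt cs)

theorem Mt_LM (cs : List (List ℕ)) : LM (Mt cs) := by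
  cases cs with
  | nil => intro _ _ _; trivial
  | cons c cs => exact LM.Mul (K_LM c)

theorem onePatAux_split (l : List (List ℕ)) : ∀ (r : ℕ) (d e : List ℕ), 1 ≤ r → Pos l →
    (∀ x ∈ d, x ≠ 1) → (1 :: (d ++ 1 :: e)).Sublist (onePatAux r l) →
    ∃ l1 l2, l = l1 ++ l2 ∧ l1 ≠ [] ∧ d.Sublist ((join l1).map (· + r)) ∧
      (1 :: e).Sublist (onePatAux (r + nLetters (join l1)) l2) := by
  induction l with
  | nil =>
    intro r d e _ _ _ h
    have := h.length_le
    simp [onePatAux] at this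
  | cons c l ih =>
    intro r d e hr hl hd h
    rw [onePatAux, List.cons_sublist_cons, List.sublist_append_iff] at h
    obtain ⟨x, y, he, hx, hy⟩ := h
    have hx1 : ∀ z ∈ x, z ≠ 1 := by
      intro z hz
      obtain ⟨w, hw, rfl⟩ := List.mem_map.1 (hx.subset hz)
      have := hl c (by simp) w hw
      omega
    -- d begins with x
    have hpre : ∃ z, d = x ++ z ∧ y = z ++ 1 :: e := by
      rcases List.append_eq_append_iff.1 he with ⟨z, h1, h2⟩ | ⟨z, h1, h2⟩
      · cases z with
        | nil => exact ⟨[], by simpa using h1.symm, by simpa using h2.symm⟩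
        | cons u z =>
          simp at h2
          exact absurd h2.1.symm (hx1 u (by simp [h1]))
      · exact ⟨z, h1, h2⟩
    obtain ⟨z, rfl, rfl⟩ := hpre
    cases z with
    | nil =>
      refine ⟨[c], l, rfl, by simp, ?_, ?_⟩
      · simpa [join_cons, join_nil] using hx
      · simpa [nL_join_cons, join_nil, nL_nil] using hy
    | cons u z =>
      have hy' : (1 :: ((u :: z) ++ 1 :: e)).Sublist (onePatAux (r + nLetters c) l) := by
        obtain ⟨t, ht⟩ := onePatAux_head l (r + nLetters c)
        rw [ht] at hy ⊢
        rw [List.cons_sublist_cons]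
        rw [List.cons_append] at hy ⊢
        rcases List.sublist_cons_iff.1 hy with h | ⟨_, h, -⟩
        · exact h
        · simp only [List.cons.injEq] at h
          exact absurd h.1 (hd u (by simp))
      obtain ⟨l1, l2, rfl, hne, h1, h2⟩ := ih _ (u :: z) e (by omega) hl.tail
        (fun w hw => hd w (by simp only [List.mem_append]; exact Or.inr hw)) hy'
      refine ⟨c :: l1, l2, rfl, by simp, ?_, ?_⟩
      · rw [join_cons, List.map_append]
        refine hx.append ?_
        convert h1 using 1
        simp [Function.comp_def, add_comm, add_left_comm]
      · rw [nL_join_cons, ← add_assoc]; exact h2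

theorem Mt_of_map (cs : List (List ℕ)) : ∀ (r' r : ℕ) (l : List (List ℕ)) (f : ℕ → ℕ),
    1 ≤ r' → 1 ≤ r → Pos cs → Pos l → SM f (onePatAux r' cs) → f 1 = 1 →
    ((onePatAux r' cs).map f).Sublist (onePatAux r l) → Mt cs l := by
  induction cs with
  | nil => intros; trivial
  | cons c cs ih =>
    intro r' r l f hr' hr hcs hl hf f1 hs
    obtain ⟨t, ht⟩ := onePatAux_head cs (r' + nLetters c)
    have hsub : ∀ x ∈ c, x + r' ∈ onePatAux r' (c :: cs) := by
      intro x hx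
      simp only [onePatAux, List.mem_cons, List.mem_append, List.mem_map]
      exact Or.inr (Or.inl ⟨x, hx, rfl⟩)
    have h1mem : 1 ∈ onePatAux r' (c :: cs) := by simp [onePatAux]
    have hs' := hs
    simp only [onePatAux, ht, List.map_cons, List.map_append, f1] at hs'
    obtain ⟨l1, l2, rfl, hne, h1, h2⟩ := onePatAux_split l r _ _ hr hl (by
      intro x hx
      rw [List.map_map, List.mem_map] at hx
      obtain ⟨y, hy, rfl⟩ := hx
      have := hf 1 h1mem _ (hsub y hy) (by have := hcs c (by simp) y hy; omega)
      simp only [Function.comp_apply]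
      omega) hs'
    refine ⟨l1, l2, rfl, ⟨hne, ?_⟩, ?_⟩
    · rw [← contains_shift _ _ r, contains_iff]
      refine ⟨fun x => f (x + r'), fun x hx y hy hxy =>
        hf _ (hsub x hx) _ (hsub y hy) (by omega), ?_⟩
      simpa [Function.comp_def] using h1
    · refine ih (r' + nLetters c) (r + nLetters (join l1)) l2 f (by omega) (by omega) hcs.tail
        (fun d hd => hl d (by simp [hd])) ?_ f1 ?_
      · intro x hx y hy hxy
        exact hf x (by simp [onePatAux, hx]) y (by simp [onePatAux, hy]) hxy
      · rw [ht, List.map_cons, f1]; exact h2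

theorem onePatAux_append (l1 l2 : List (List ℕ)) : ∀ r, l1 ≠ [] →
    (1 :: ((join l1).map (· + r) ++ onePatAux (r + nLetters (join l1)) l2)).Sublist
      (onePatAux r (l1 ++ l2)) := by
  induction l1 with
  | nil => intro r h; exact absurd rfl h
  | cons c l ih =>
    intro r _
    rw [List.cons_append, onePatAux, List.cons_sublist_cons, join_cons, List.map_append,
      List.append_assoc, List.append_sublist_append_left]
    by_cases hl : l = []
    · subst hl
      simp [join_nil]
    · have := ih (r + nLetters c) hl
      have := (List.sublist_cons_self _ _).trans this
      convert this using 1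
      have e : nLetters (c ++ (join l).map (· + nLetters c)) = nLetters c + nLetters (join l) :=
        nL_join_cons c l
      rw [e, add_assoc]
      simp [Function.comp_def, add_comm, add_left_comm]

theorem map_of_Mt (cs : List (List ℕ)) : ∀ (r' r : ℕ) (l : List (List ℕ)),
    1 ≤ r' → 1 ≤ r → Pos cs → Pos l → Mt cs l → ∃ f : ℕ → ℕ, SM f (onePatAux r' cs) ∧ f 1 = 1 ∧
    ((onePatAux r' cs).map f).Sublist (onePatAux r l) := by
  induction cs with
  | nil =>
    intro r' r l _ _ _ _ _
    refine ⟨id, fun x _ y _ h => h, rfl, ?_⟩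
    obtain ⟨t, ht⟩ := onePatAux_head l r
    simp [onePatAux, ht]
  | cons c cs ih =>
    rintro r' r l hr' hr hcs hl ⟨l1, l2, rfl, ⟨hne, hc⟩, hm⟩
    have hl1 : Pos l1 := fun d hd => hl d (by simp [hd])
    have hl2 : Pos l2 := fun d hd => hl d (by simp [hd])
    obtain ⟨f2, hf2, f21, hs2⟩ := ih (r' + nLetters c) (r + nLetters (join l1)) l2 (by omega)
      (by omega) hcs.tail hl2 hm
    rw [contains_iff] at hc
    obtain ⟨g, hg, hgs⟩ := hc
    have hcpos := hcs c (by simp)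
    have hgm : ∀ x ∈ c, g x ∈ join l1 := fun x hx => hgs.subset (List.mem_map_of_mem hx)
    let f : ℕ → ℕ := fun x => if x ≤ 1 then 1 else if x ≤ r' + nLetters c then g (x - r') + r else f2 x
    have fa : ∀ x ∈ c, f (x + r') = g x + r := by
      intro x hx
      have := hcpos x hx
      have := le_nL hx
      simp only [f]
      rw [if_neg (by omega), if_pos (by omega)]
      simp
    have fb0 : ∀ x ∈ onePatAux (r' + nLetters c) cs, x = 1 ∨ r' + nLetters c < x := by
      intro x hx
      rcases mem_onePatAux (by omega) hcs.tail hx with h | ⟨y, hy, rfl⟩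
      · exact Or.inl h
      · have := join_pos hcs.tail y hy
        omega
    have fb : ∀ x ∈ onePatAux (r' + nLetters c) cs, f x = f2 x := by
      intro x hx
      rcases fb0 x hx with rfl | h
      · simp [f, f21]
      · simp only [f]
        rw [if_neg (by omega), if_neg (by omega)]
    have h1m : 1 ∈ onePatAux (r' + nLetters c) cs := by
      obtain ⟨t, ht⟩ := onePatAux_head cs (r' + nLetters c)
      simp [ht]
    have fb2 : ∀ x ∈ onePatAux (r' + nLetters c) cs, x ≠ 1 → r + nLetters (join l1) < f2 x := by
      intro x hx hx1
      have h0 := fb0 x hx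
      have h1 := hf2 1 h1m x hx (by omega)
      rcases mem_onePatAux (by omega) hl2 (hs2.subset (List.mem_map_of_mem hx)) with h | ⟨y, hy, h⟩
      · omega
      · have := join_pos hl2 y hy
        omega
    have f1 : f 1 = 1 := by simp [f]
    refine ⟨f, ?_, f1, ?_⟩
    · have hcase : ∀ x ∈ onePatAux r' (c :: cs),
          (∃ y ∈ c, x = y + r') ∨ x ∈ onePatAux (r' + nLetters c) cs := by
        intro x hx
        simp only [onePatAux, List.mem_cons, List.mem_append, List.mem_map] at hx
        rcases hx with rfl | ⟨y, hy, rfl⟩ | h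
        · exact Or.inr h1m
        · exact Or.inl ⟨y, hy, rfl⟩
        · exact Or.inr h
      intro x hx y hy hxy
      have cx := hcase x hx
      have cy := hcase y hy
      clear hx hy
      rcases cx with ⟨x, hx, rfl⟩ | hx <;> rcases cy with ⟨y, hy, rfl⟩ | hy
      · rw [fa x hx, fa y hy]
        have := hg x hx y hy (by omega)
        omega
      · rw [fa x hx, fb y hy]
        have := hcpos x hx
        have := fb2 y hy (by omega)
        have := le_nL (hgm x hx)
        omega
      · have := le_nL hy
        rcases fb0 x hx with rfl | h
        · rw [f1, fa y hy]
          have := join_pos hl1 _ (hgm y hy)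
          omega
        · omega
      · rw [fb x hx, fb y hy]
        exact hf2 x hx y hy hxy
    · refine List.Sublist.trans ?_ (onePatAux_append l1 l2 r hne)
      rw [onePatAux, List.map_cons, f1, List.cons_sublist_cons, List.map_append]
      refine List.Sublist.append ?_ ?_
      · have : (c.map (· + r')).map f = (c.map g).map (· + r) := by
          rw [List.map_map, List.map_map]
          exact List.map_congr_left fa
        rw [this]
        exact hgs.map _
      · rw [List.map_congr_left fb]
        exact hs2

/-- containment of a connected pattern pattern reduces to letters > 1 -/
theorem sublist_join_of_gt {l : List (List ℕ)} {t : List ℕ} (hl : Pos l)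
    (h : t.Sublist (onePat l)) (ht : ∀ x ∈ t, x ≠ 1) : t.Sublist ((join l).map (· + 1)) := by
  have := h.filter (fun x => decide (x ≠ 1))
  rw [onePat, filter_onePatAux l 1 le_rfl hl] at this
  rwa [List.filter_eq_self.2 (fun x hx => by simpa using ht x hx)] at this

theorem join_sub_onePat {l : List (List ℕ)} (hl : Pos l) : ((join l).map (· + 1)).Sublist (onePat l) := by
  rw [← filter_onePatAux l 1 le_rfl hl]
  exact List.filter_sublist

theorem onePat_contains_iff {l s : List (List ℕ)} (hl : Pos l) (hs : Pos s) :
    PatContains (onePat l) (onePat s) ↔ (∃ c ∈ l, PatContains c (onePat s)) ∨ Mt s l := by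
  constructor
  · intro h
    rw [contains_iff] at h
    obtain ⟨f, hf, hsub⟩ := h
    by_cases f1 : f 1 = 1
    · right
      exact Mt_of_map s 1 1 l f le_rfl le_rfl hs hl hf f1 hsub
    · left
      rw [← join_contains_iff hl (onePat_indec s), ← contains_shift _ _ 1, contains_iff]
      refine ⟨f, hf, sublist_join_of_gt hl hsub ?_⟩
      have hge : ∀ x ∈ onePat s, 1 ≤ f x := by
        intro x hx
        rcases mem_onePatAux le_rfl hl (hsub.subset (List.mem_map_of_mem hx)) with h | ⟨y, -, h⟩ <;> omega
      have h1m : 1 ∈ onePat s := by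
        obtain ⟨t, ht⟩ := onePatAux_head s 1
        simp [onePat, ht]
      intro x hx
      obtain ⟨y, hy, rfl⟩ := List.mem_map.1 hx
      have := hge 1 h1m
      rcases mem_onePatAux le_rfl hs hy with rfl | ⟨z, hz, rfl⟩
      · exact f1
      · have := join_pos hs z hz
        have := hf 1 h1m _ hy (by omega)
        omega
  · rintro (⟨c, hc, h⟩ | h)
    · refine contains_mono (join_sub_onePat hl) ?_
      rw [contains_shift]
      exact join_contains_of_mem hc h
    · obtain ⟨f, hf, -, hsub⟩ := map_of_Mt s 1 1 l le_rfl le_rfl hs hl h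
      rw [contains_iff]
      exact ⟨f, hf, hsub⟩

end S9

namespace S9

/-! ### Part 4: structure of non-crossing words -/

/-- the set of non-crossing RGFs -/
def X (w : List ℕ) : Prop := RG 0 w ∧ NonCrossing w

theorem X.pos {l : List (List ℕ)} (h : ∀ c ∈ l, X c) : Pos l := fun c hc => RG_pos (h c hc).1

theorem indec_1212 : Indec [1, 2, 1, 2] := by
  refine ⟨by simp, ?_⟩
  intro p1 p2 h h1 h2
  rcases p1 with _ | ⟨a, _ | ⟨b, _ | ⟨c, _ | ⟨d, e⟩⟩⟩⟩
  · simp at h1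
  all_goals simp at h
  · obtain ⟨rfl, rfl⟩ := h; exact ⟨1, by simp, 1, by simp, le_rfl⟩
  · obtain ⟨rfl, rfl, rfl⟩ := h; exact ⟨1, by simp, 1, by simp, le_rfl⟩
  · obtain ⟨rfl, rfl, rfl, rfl⟩ := h; exact ⟨2, by simp, 2, by simp, le_rfl⟩
  · exact absurd h.2.2.2.2.2 h2

theorem contains_1212 {w : List ℕ} {x y : ℕ} (hxy : x < y) (h : [x, y, x, y].Sublist w) :
    PatContains w [1, 2, 1, 2] := by
  rw [contains_iff]
  refine ⟨fun n => if n ≤ 1 then x else y, ?_, by simpa using h⟩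
  intro a ha b hb hab
  simp at ha hb
  have : a = 1 := by omega
  have : b = 2 := by omega
  subst a b
  simpa using hxy

theorem onePat_1212 {l : List (List ℕ)} (hl : Pos l) :
    PatContains (onePat l) [1, 2, 1, 2] ↔ ∃ c ∈ l, PatContains c [1, 2, 1, 2] := by
  constructor
  · intro h
    rw [contains_iff] at h
    obtain ⟨f, hf, hsub⟩ := h
    have h12 := hf 1 (by simp) 2 (by simp) (by omega)
    simp only [List.map_cons, List.map_nil] at hsub
    by_cases f1 : f 1 = 1
    · exfalso
      rw [f1] at hsub h12
      obtain ⟨l1, l2, rfl, -, h1, h2⟩ := onePatAux_split l 1 [f 2] [f 2] le_rfl hl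
        (by simp; omega) hsub
      have a := h1.subset (show f 2 ∈ [f 2] by simp)
      obtain ⟨z, hz, hz2⟩ := List.mem_map.1 a
      have := le_nL hz
      have hl2 : Pos l2 := fun d hd => hl d (by simp [hd])
      rcases mem_onePatAux (by omega) hl2 (h2.subset (show f 2 ∈ [1, f 2] by simp))
        with h | ⟨y, hy, h⟩
      · omega
      · have := join_pos hl2 y hy
        omega
    · rw [← join_contains_iff hl indec_1212, ← contains_shift _ _ 1]
      refine contains_1212 h12 (sublist_join_of_gt hl hsub ?_)
      have : 1 ≤ f 1 := by
        rcases mem_onePatAux le_rfl hl (hsub.subset (show f 1 ∈ _ by simp)) with h | ⟨y, -, h⟩ <;> omega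
      simp; omega
  · rintro ⟨c, hc, h⟩
    refine contains_mono (join_sub_onePat hl) ?_
    rw [contains_shift]
    exact join_contains_of_mem hc h

theorem X_onePat {l : List (List ℕ)} (hl : ∀ c ∈ l, X c) : X (onePat l) := by
  refine ⟨RG_onePat (fun c hc => (hl c hc).1), ?_⟩
  intro h
  rw [onePat_1212 (X.pos hl)] at h
  obtain ⟨c, hc, h⟩ := h
  exact (hl c hc).2 h

theorem X_join {l : List (List ℕ)} (hl : ∀ c ∈ l, X c) : X (join l) := by
  refine ⟨RG_join (fun c hc => (hl c hc).1), ?_⟩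
  intro h
  rw [join_contains_iff (X.pos hl) indec_1212] at h
  obtain ⟨c, hc, h⟩ := h
  exact (hl c hc).2 h

theorem nL_onePatAux (l : List (List ℕ)) : ∀ s, 1 ≤ s →
    max s (nLetters (onePatAux s l)) = s + nLetters (join l) := by
  induction l with
  | nil => intro s hs; simp [onePatAux, join_nil, nL_cons, nL_nil, hs]
  | cons c l ih =>
    intro s hs
    have h1 := ih (s + nLetters c) (by omega)
    have h2 := nL_shift c s
    rw [onePatAux, nL_cons, nL_append, nL_join_cons]
    omega

theorem nL_onePat (l : List (List ℕ)) : nLetters (onePat l) = 1 + nLetters (join l) := by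
  have := nL_onePatAux l 1 le_rfl
  rw [← this]
  obtain ⟨t, ht⟩ := onePatAux_head l 1
  rw [onePat, ht, nL_cons]
  omega

theorem decomp : ∀ (n s : ℕ) (r : List ℕ), r.length ≤ n → 1 ≤ s → RG s r →
    (∀ x ∈ r, x = 1 ∨ s < x) → NonCrossing (1 :: r) →
    ∃ l c, (∀ d ∈ l, RG 0 d) ∧ RG 0 c ∧
      1 :: r = onePatAux s l ++ c.map (· + (s + nLetters (join l))) := by
  intro n
  induction n with
  | zero =>
    intro s r hr _ _ _ _
    have : r = [] := List.length_eq_zero_iff.1 (by omega)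
    subst this
    exact ⟨[], [], by simp, trivial, by simp [onePatAux]⟩
  | succ n ih =>
    intro s r hr hs hrg hx hnc
    by_cases h1 : 1 ∈ r
    · obtain ⟨p, r', rfl, hp⟩ := List.eq_append_cons_of_mem h1
      rw [RG_append] at hrg
      obtain ⟨c, hc, rfl⟩ := RG_exists_unshift hrg.1 (fun x hxp => by
        rcases hx x (by simp [hxp]) with rfl | h
        · exact absurd hxp hp
        · exact h)
      have h2 := hrg.2
      rw [nL_shift] at h2
      have h3 := h2.2.2
      rw [max_eq_left (by omega)] at h3
      obtain ⟨l, d, hl, hd, he⟩ := ih (s + nLetters c) r' (by simp at hr; omega) (by omega) h3 (by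
        intro x hxr
        by_contra hcon
        push Not at hcon
        have hsx : s < x := by
          rcases hx x (by simp [hxr]) with h | h
          · exact absurd h hcon.1
          · exact h
        have hm : x - s ∈ c := RG_mem hc (by omega) (by omega)
        apply hnc
        refine contains_1212 (x := 1) (y := x) (by omega) ?_
        rw [List.cons_sublist_cons]
        refine List.Sublist.append (l₁ := [x]) (r₁ := [1, x]) ?_ ?_
        · rw [List.singleton_sublist, List.mem_map]
          exact ⟨x - s, hm, by omega⟩
        · rw [List.cons_sublist_cons, List.singleton_sublist]
          exact hxr) (fun hcon => hnc (contains_mono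
            ((List.sublist_append_right _ _).trans (List.sublist_cons_self _ _)) hcon))
      refine ⟨c :: l, d, by simpa using ⟨hc, hl⟩, hd, ?_⟩
      rw [he, onePatAux, nL_join_cons]
      simp [add_assoc]
    · obtain ⟨c, hc, rfl⟩ := RG_exists_unshift hrg (fun x hxp => by
        rcases hx x hxp with rfl | h
        · exact absurd hxp h1
        · exact h)
      exact ⟨[], c, by simp, hc, by simp [onePatAux, join_nil, nL_nil]⟩

theorem X_decomp {w : List ℕ} (hw : X w) (hne : w ≠ []) :
    ∃ l c, (∀ d ∈ l, X d) ∧ X c ∧ w = rgfComp (onePat l) c := by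
  obtain ⟨x, r, rfl⟩ := List.exists_cons_of_ne_nil hne
  obtain ⟨⟨h1, h2, h3⟩, hnc⟩ := hw
  have : x = 1 := by omega
  subst this
  obtain ⟨l, c, hl, hc, he⟩ := decomp r.length 1 r le_rfl le_rfl (by simpa using h3)
    (fun x hx => by have := RG_pos h3 x hx; omega) hnc
  have he' : 1 :: r = rgfComp (onePat l) c := by
    rw [he, rgfComp, nL_onePat]; rfl
  have hlp : Pos l := fun c hc => RG_pos (hl c hc)
  refine ⟨l, c, fun d hd => ⟨hl d hd, fun hcon => hnc ?_⟩, ⟨hc, fun hcon => hnc ?_⟩, he'⟩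
  · rw [he', rgfComp]
    exact contains_mono (List.sublist_append_left _ _) ((onePat_1212 hlp).2 ⟨d, hd, hcon⟩)
  · rw [he', rgfComp]
    refine contains_mono (List.sublist_append_right _ _) ?_
    rwa [contains_shift]

theorem X_connected {w : List ℕ} (hw : X w) (hc : Connected w) :
    ∃ l, (∀ d ∈ l, X d) ∧ w = onePat l := by
  obtain ⟨l, c, hl, hx, he⟩ := X_decomp hw hc.1
  refine ⟨l, hl, ?_⟩
  by_cases h : c = []
  · subst h; simpa [rgfComp] using he
  · exact absurd ⟨onePat l, c, (isRGF_iff _).2 (X_onePat hl).1, (isRGF_iff _).2 hx.1,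
      (onePat_connected l).1, h, he⟩ hc.2

theorem X_components : ∀ (n : ℕ) (w : List ℕ), w.length ≤ n → X w →
    ∃ L, (∀ c ∈ L, X c ∧ Connected c) ∧ w = join L := by
  intro n
  induction n with
  | zero =>
    intro w hw _
    have : w = [] := List.length_eq_zero_iff.1 (by omega)
    exact ⟨[], by simp, this⟩
  | succ n ih =>
    intro w hw hX
    by_cases hne : w = []
    · exact ⟨[], by simp, hne⟩
    · obtain ⟨l, c, hl, hc, rfl⟩ := X_decomp hX hne
      obtain ⟨t, ht⟩ := onePatAux_head l 1
      obtain ⟨L, hL, rfl⟩ := ih c (by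
        simp [rgfComp, onePat, ht] at hw; omega) hc
      refine ⟨onePat l :: L, ?_, rfl⟩
      simp only [List.mem_cons, forall_eq_or_imp]
      exact ⟨⟨X_onePat hl, onePat_connected l⟩, hL⟩

theorem onePatAux_inj (l : List (List ℕ)) : ∀ (l' : List (List ℕ)) (s : ℕ), 1 ≤ s → Pos l → Pos l' →
    onePatAux s l = onePatAux s l' → l = l' := by
  induction l with
  | nil =>
    intro l' s _ _ _ h
    cases l' with
    | nil => rfl
    | cons c l' =>
      obtain ⟨t, ht⟩ := onePatAux_head l' (s + nLetters c)
      have := congrArg List.length h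
      simp [onePatAux, ht] at this
  | cons c l ih =>
    intro l' s hs hl hl' h
    obtain ⟨t, ht⟩ := onePatAux_head l (s + nLetters c)
    cases l' with
    | nil =>
      have := congrArg List.length h
      simp [onePatAux, ht] at this
    | cons c' l' =>
      obtain ⟨t', ht'⟩ := onePatAux_head l' (s + nLetters c')
      simp only [onePatAux, List.cons.injEq, true_and] at h
      have key : ∀ (u v t t' : List ℕ), (∀ x ∈ u, x ≠ 1) → (∀ x ∈ v, x ≠ 1) →
          u ++ 1 :: t = v ++ 1 :: t' → u = v := by
        intro u
        induction u with
        | nil =>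
          intro v t t' _ hv h
          cases v with
          | nil => rfl
          | cons y v => simp at h; exact absurd h.1.symm (hv y (by simp))
        | cons x u ihu =>
          intro v t t' hu hv h
          cases v with
          | nil => simp at h; exact absurd h.1 (hu x (by simp))
          | cons y v =>
            simp only [List.cons_append, List.cons.injEq] at h
            rw [h.1, ihu v t t' (fun x hx => hu x (by simp [hx])) (fun x hx => hv x (by simp [hx])) h.2]
      have hno : ∀ d : List ℕ, (∀ x ∈ d, 1 ≤ x) → ∀ x ∈ d.map (· + s), x ≠ 1 := by
        intro d hd x hx
        obtain ⟨y, hy, rfl⟩ := List.mem_map.1 hx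
        have := hd y hy
        omega
      have e := key _ _ t t' (hno c (hl c (by simp))) (hno c' (hl' c' (by simp)))
        (by rw [← ht, ← ht']; exact h)
      have ec : c = c' := List.map_injective_iff.2 (add_left_injective s) e
      subst ec
      rw [ih l' _ (by omega) hl.tail hl'.tail (List.append_cancel_left h)]

theorem onePat_inj {l l' : List (List ℕ)} (hl : Pos l) (hl' : Pos l') (h : onePat l = onePat l') :
    l = l' := onePatAux_inj l l' 1 le_rfl hl hl' h

theorem join_inj (l : List (List ℕ)) : ∀ l' : List (List ℕ), Pos l → Pos l' → (∀ c ∈ l, Indec c) →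
    (∀ c ∈ l', Indec c) → join l = join l' → l = l' := by
  have key : ∀ (c c' u u' : List ℕ), Indec c' → (∀ x ∈ u, 1 ≤ x) →
      c ≠ [] → c ++ u.map (· + nLetters c) = c' ++ u' → c.length ≤ c'.length → c = c' := by
    intro c c' u u' hc' hu hc h hlen
    obtain ⟨z, h1, h2⟩ : ∃ z, c' = c ++ z ∧ u.map (· + nLetters c) = z ++ u' := by
      rcases List.append_eq_append_iff.1 h with ⟨z, h1, h2⟩ | ⟨z, h1, h2⟩
      · exact ⟨z, h1, h2⟩
      · have : z = [] := by
          have := congrArg List.length h1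
          simp at this
          exact List.length_eq_zero_iff.1 (by omega)
        subst this
        exact ⟨[], by simpa using h1.symm, by simpa using h2.symm⟩
    by_cases hz : z = []
    · simp [h1, hz]
    · exfalso
      obtain ⟨x, hx, y, hy, hyx⟩ := hc'.2 c z h1 hc hz
      have a := le_nL hx
      have : y ∈ u.map (· + nLetters c) := by rw [h2]; simp [hy]
      obtain ⟨w, hw, rfl⟩ := List.mem_map.1 this
      have := hu w hw
      omega
  induction l with
  | nil =>
    intro l' _ _ _ h' h
    cases l' with
    | nil => rfl
    | cons c l' =>
      rw [join_nil, join_cons] at h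
      exact absurd (List.append_eq_nil_iff.1 h.symm).1 (h' c (by simp)).1
  | cons c l ih =>
    intro l' hp hp' h1 h1' h
    cases l' with
    | nil =>
      rw [join_nil, join_cons] at h
      exact absurd (List.append_eq_nil_iff.1 h).1 (h1 c (by simp)).1
    | cons c' l' =>
      rw [join_cons, join_cons] at h
      have ec : c = c' := by
        rcases le_total c.length c'.length with hle | hle
        · exact key _ _ _ _ (h1' c' (by simp)) (join_pos hp.tail) (h1 c (by simp)).1 h hle
        · exact (key _ _ _ _ (h1 c (by simp)) (join_pos hp'.tail) (h1' c' (by simp)).1 h.symm hle).symm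
      subst ec
      have := List.map_injective_iff.2 (add_left_injective (nLetters c)) (List.append_cancel_left h)
      rw [ih l' hp.tail hp'.tail (fun d hd => h1 d (by simp [hd])) (fun d hd => h1' d (by simp [hd])) this]

/-! ### reversal invariance -/

theorem range_sublist {w : List ℕ} : ∀ (m k : ℕ), RG m w → m + k ≤ max m (nLetters w) →
    (List.range' (m + 1) k).Sublist w := by
  induction w with
  | nil =>
    intro m k _ h
    simp [nL_nil] at h
    simp [h]
  | cons x w ih =>
    intro m k h hk
    obtain ⟨a, b, c⟩ := h
    rw [nL_cons] at hk
    by_cases hx : x = m + 1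
    · subst hx
      cases k with
      | zero => simp
      | succ k =>
        rw [List.range'_succ, List.cons_sublist_cons]
        apply ih
        · simpa using c
        · omega
    · have : max m x = m := by omega
      rw [this] at c
      exact (ih m k c (by omega)).trans (List.sublist_cons_self _ _)

theorem nodup_eq_range {w : List ℕ} : ∀ (m : ℕ), RG m w → w.Nodup → (∀ x ∈ w, m < x) →
    w = List.range' (m + 1) w.length := by
  induction w with
  | nil => intros; simp
  | cons x w ih =>
    intro m h hn hm
    obtain ⟨a, b, c⟩ := h
    have h1 := hm x (by simp)
    have hx : x = m + 1 := by omega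
    subst hx
    rw [List.nodup_cons] at hn
    rw [List.length_cons, List.range'_succ]
    congr 1
    apply ih
    · simpa using c
    · exact hn.2
    · intro x hx
      have := hm x (by simp [hx])
      have : x ≠ m + 1 := by rintro rfl; exact hn.1 hx
      omega

theorem contains_range {w : List ℕ} (hw : RG 0 w) (k : ℕ) :
    PatContains w (List.range' 1 k) ↔ k ≤ nLetters w := by
  constructor
  · intro h
    rw [contains_iff] at h
    obtain ⟨f, hf, hs⟩ := h
    have : ∀ j, j ≤ k → 1 ≤ j → j ≤ f j := by
      intro j hj h1
      induction j, h1 using Nat.le_induction with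
      | base =>
        exact RG_pos hw _ (hs.subset (List.mem_map_of_mem (by simp; omega)))
      | succ j h1 ih =>
        have := ih (by omega)
        have := hf j (by simp; omega) (j + 1) (by simp; omega) (by omega)
        omega
    rcases Nat.eq_zero_or_pos k with rfl | hk
    · omega
    · exact (this k le_rfl hk).trans (le_nL (hs.subset (List.mem_map_of_mem (by simp; omega))))
  · intro h
    have := range_sublist 0 k hw (by omega)
    rw [contains_iff]
    exact ⟨id, fun _ _ _ _ h => h, by simpa using this⟩

theorem K_rev {a : List ℕ} (ha : RG 0 a) (hq : a = [] ∨ Connected a ∨ a.Nodup)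
    (l : List (List ℕ)) (hl : ∀ c ∈ l, X c) : K a l ↔ K a l.reverse := by
  have hr : ∀ c ∈ l.reverse, X c := fun c hc => hl c (by simpa using hc)
  have hA : Connected a → (K a l ↔ K a l.reverse) := by
    intro hc
    have hi := indec_of_connected ha hc
    simp only [K, join_contains_iff (X.pos hl) hi, join_contains_iff (X.pos hr) hi]
    simp
  have hB : a.Nodup → (K a l ↔ K a l.reverse) := by
    intro hc
    rw [nodup_eq_range 0 ha hc (fun x hx => RG_pos ha x hx)]
    simp only [K, zero_add, contains_range (RG_join fun c hc => (hl c hc).1),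
      contains_range (RG_join fun c hc => (hr c hc).1), nL_join]
    simp
  rcases hq with h | h | h
  · exact hB (by simp [h])
  · exact hA h
  · exact hB h

theorem E_main (pre post : List (List ℕ)) (a b : List ℕ) (ha : RG 0 a)
    (hq : a = [] ∨ Connected a ∨ a.Nodup) :
    E X (Mt (pre ++ [a, b] ++ post)) (Mt (pre ++ [b, a] ++ post)) := by
  induction pre with
  | nil => exact E.swap (K_rev ha hq) (K_RM a) (K_LM b) (K_RM b)
  | cons c pre ih => exact E.left ih (Mt_LM _) (Mt_LM _) (K c)

end S9

namespace S9

/-! ### Part 5: counting -/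

theorem nL_le_length {w : List ℕ} : ∀ {m : ℕ}, RG m w → nLetters w ≤ m + w.length := by
  induction w with
  | nil => intro m _; simp [nL_nil]
  | cons x w ih =>
    intro m h
    obtain ⟨a, b, c⟩ := h
    have := ih c
    rw [nL_cons, List.length_cons]
    omega

theorem X_finite (A : List ℕ → Prop) (hA : ∀ w, A w → X w) (n : ℕ) :
    {w | A w ∧ w.length = n}.Finite := by
  refine Set.Finite.subset ((List.finite_length_eq (Fin (n + 1)) n).image (List.map Fin.val)) ?_
  rintro w ⟨hw, hl⟩
  have hx : ∀ x ∈ w, x < n + 1 := by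
    intro x hx
    have := le_nL hx
    have := nL_le_length (hA w hw).1
    omega
  refine ⟨w.attach.map (fun x => ⟨x.1, hx x.1 x.2⟩), by simpa using hl, ?_⟩
  simp [List.map_map, Function.comp_def]

theorem ncard_of_bijOn {α β : Type} {f : α → β} {s : Set α} {t : Set β} (h : Set.BijOn f s t) :
    s.ncard = t.ncard := by
  rw [← h.image_eq, Set.ncard_image_of_injOn h.injOn]

theorem bij_of_counts (A B : List ℕ → Prop) (hA : ∀ w, A w → X w) (hB : ∀ w, B w → X w) (N : ℕ)
    (h : ∀ m < N, {w | A w ∧ w.length = m}.ncard = {w | B w ∧ w.length = m}.ncard) :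
    ∃ g : List ℕ → List ℕ, Set.BijOn g {w | A w ∧ w.length < N} {w | B w ∧ w.length < N} ∧
      ∀ w, A w → w.length < N → (g w).length = w.length := by
  have h1 : ∀ m, ∃ g : List ℕ → List ℕ, m < N →
      Set.BijOn g {w | A w ∧ w.length = m} {w | B w ∧ w.length = m} := by
    intro m
    by_cases hm : m < N
    · have e : {w | A w ∧ w.length = m}.encard = {w | B w ∧ w.length = m}.encard := by
        rw [← (X_finite A hA m).cast_ncard_eq, ← (X_finite B hB m).cast_ncard_eq, h m hm]
      obtain ⟨g, hg⟩ := (X_finite A hA m).exists_bijOn_of_encard_eq e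
      exact ⟨g, fun _ => hg⟩
    · exact ⟨id, fun h => absurd h hm⟩
  choose g hg using h1
  have hlen : ∀ w, A w → w.length < N → B (g w.length w) ∧ (g w.length w).length = w.length := by
    intro w hw hN
    exact (hg _ hN).mapsTo ⟨hw, rfl⟩
  refine ⟨fun w => g w.length w, ⟨?_, ?_, ?_⟩, fun w hw hN => (hlen w hw hN).2⟩
  · rintro w ⟨hw, hN⟩
    have := hlen w hw hN
    exact ⟨this.1, by rw [this.2]; exact hN⟩
  · rintro w ⟨hw, hN⟩ w' ⟨hw', hN'⟩ he
    simp only at he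
    have e : w.length = w'.length := by
      rw [← (hlen w hw hN).2, ← (hlen w' hw' hN').2, he]
    rw [← e] at he
    exact (hg _ hN).injOn ⟨hw, rfl⟩ ⟨hw', e.symm⟩ he
  · rintro y ⟨hy, hN⟩
    obtain ⟨w, ⟨hw, hl⟩, he⟩ := (hg _ hN).surjOn ⟨hy, rfl⟩
    refine ⟨w, ⟨hw, by omega⟩, ?_⟩
    simp only
    rw [hl, he]

theorem map_bijOn (g : List ℕ → List ℕ) (A B : Set (List ℕ)) (P P' : List (List ℕ) → Prop)
    (h : Set.BijOn g A B) (hP : ∀ L, (∀ c ∈ L, c ∈ A) → (P L ↔ P' (L.map g))) :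
    Set.BijOn (List.map g) {L : List (List ℕ) | (∀ c ∈ L, c ∈ A) ∧ P L} {L : List (List ℕ) | (∀ c ∈ L, c ∈ B) ∧ P' L} := by
  refine ⟨?_, ?_, ?_⟩
  · rintro L ⟨h1, h2⟩
    refine ⟨?_, (hP L h1).1 h2⟩
    intro c hc
    obtain ⟨d, hd, rfl⟩ := List.mem_map.1 hc
    exact h.mapsTo (h1 d hd)
  · rintro L ⟨h1, -⟩ L' ⟨h1', -⟩ he
    induction L generalizing L' with
    | nil => simpa using he.symm
    | cons c L ih =>
      cases L' with
      | nil => simp at he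
      | cons c' L' =>
        simp only [List.map_cons, List.cons.injEq] at he
        rw [h.injOn (h1 c (by simp)) (h1' c' (by simp)) he.1,
          ih (fun d hd => h1 d (by simp [hd])) (fun d hd => h1' d (by simp [hd])) he.2]
  · rintro L ⟨h1, h2⟩
    have : ∃ L0 : List (List ℕ), (∀ c ∈ L0, c ∈ A) ∧ L0.map g = L := by
      clear h2
      induction L with
      | nil => exact ⟨[], by simp, rfl⟩
      | cons c L ih =>
        obtain ⟨L0, a, b⟩ := ih (fun d hd => h1 d (by simp [hd]))
        obtain ⟨d, hd, e⟩ := h.surjOn (h1 c (by simp))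
        exact ⟨d :: L0, by simpa using ⟨hd, a⟩, by simp [e, b]⟩
    obtain ⟨L0, a, rfl⟩ := this
    exact ⟨L0, ⟨a, (hP L0 a).2 h2⟩, rfl⟩

theorem le_sum_length {L : List (List ℕ)} {c : List ℕ} (hc : c ∈ L) :
    c.length ≤ (L.map List.length).sum :=
  List.le_sum_of_mem (List.mem_map_of_mem hc)

theorem map_lengths {L : List (List ℕ)} {g : List ℕ → List ℕ} (h : ∀ c ∈ L, (g c).length = c.length) :
    ((L.map g).map List.length).sum = (L.map List.length).sum := by
  rw [List.map_map]
  congr 1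
  exact List.map_congr_left h

theorem join_count (A B : List ℕ → Prop) (hA : ∀ w, A w → X w ∧ Connected w)
    (hB : ∀ w, B w → X w ∧ Connected w) (N : ℕ)
    (h : ∀ m < N, {w | A w ∧ w.length = m}.ncard = {w | B w ∧ w.length = m}.ncard)
    (Q : ℕ → Prop) (n : ℕ) (hn : n < N) :
    {w | ∃ L : List (List ℕ), Q L.length ∧ (∀ c ∈ L, A c) ∧ w = join L ∧ w.length = n}.ncard =
    {w | ∃ L : List (List ℕ), Q L.length ∧ (∀ c ∈ L, B c) ∧ w = join L ∧ w.length = n}.ncard := by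
  have key : ∀ A : List ℕ → Prop, (∀ w, A w → X w ∧ Connected w) →
      {w | ∃ L : List (List ℕ), Q L.length ∧ (∀ c ∈ L, A c) ∧ w = join L ∧ w.length = n}.ncard =
      {L : List (List ℕ) | (∀ c ∈ L, c ∈ {w | A w ∧ w.length < N}) ∧ (Q L.length ∧ (L.map List.length).sum = n)}.ncard := by
    intro A hA
    symm
    apply ncard_of_bijOn (f := join)
    refine ⟨?_, ?_, ?_⟩
    · rintro L ⟨h1, h2, h3⟩
      exact ⟨L, h2, fun c hc => (h1 c hc).1, rfl, by rw [length_join, h3]⟩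
    · rintro L ⟨h1, -⟩ L' ⟨h1', -⟩ he
      have hx : ∀ c ∈ L, X c ∧ Connected c := fun c hc => hA c (h1 c hc).1
      have hx' : ∀ c ∈ L', X c ∧ Connected c := fun c hc => hA c (h1' c hc).1
      exact join_inj L L' (fun c hc => RG_pos (hx c hc).1.1) (fun c hc => RG_pos (hx' c hc).1.1)
        (fun c hc => indec_of_connected (hx c hc).1.1 (hx c hc).2)
        (fun c hc => indec_of_connected (hx' c hc).1.1 (hx' c hc).2) he
    · rintro w ⟨L, h1, h2, rfl, h3⟩
      rw [length_join] at h3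
      refine ⟨L, ⟨fun c hc => ⟨h2 c hc, ?_⟩, h1, h3⟩, rfl⟩
      have := le_sum_length hc
      omega
  rw [key A hA, key B hB]
  obtain ⟨g, hg, hlen⟩ := bij_of_counts A B (fun w hw => (hA w hw).1) (fun w hw => (hB w hw).1) N h
  refine ncard_of_bijOn (map_bijOn g _ _ _ _ hg ?_)
  intro L hL
  rw [map_lengths (fun c hc => hlen c (hL c hc).1 (hL c hc).2), List.length_map]

/-! ### Avoiders -/

def Av (σ w : List ℕ) : Prop := X w ∧ ¬ PatContains w σ
def Cn (σ w : List ℕ) : Prop := Av σ w ∧ Connected w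

theorem join_mem_iff {s L : List (List ℕ)}
    (hL : ∀ c ∈ L, X c) : ¬ PatContains (join L) (onePat s) ↔ ∀ c ∈ L, ¬ PatContains c (onePat s) := by
  rw [join_contains_iff (X.pos hL) (onePat_indec s)]
  push Not
  rfl

theorem Av_eq (s : List (List ℕ)) (n : ℕ) :
    {w | Av (onePat s) w ∧ w.length = n} =
    {w | ∃ L : List (List ℕ), True ∧ (∀ c ∈ L, Cn (onePat s) c) ∧ w = join L ∧ w.length = n} := by
  ext w
  constructor
  · rintro ⟨⟨h1, h2⟩, h3⟩
    obtain ⟨L, hL, rfl⟩ := X_components w.length w le_rfl h1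
    rw [join_mem_iff (fun c hc => (hL c hc).1)] at h2
    exact ⟨L, trivial, fun c hc => ⟨⟨(hL c hc).1, h2 c hc⟩, (hL c hc).2⟩, rfl, h3⟩
  · rintro ⟨L, -, hL, rfl, h3⟩
    refine ⟨⟨X_join (fun c hc => (hL c hc).1.1), ?_⟩, h3⟩
    rw [join_mem_iff (fun c hc => (hL c hc).1.1)]
    exact fun c hc => (hL c hc).1.2

theorem nc_eq (s : List (List ℕ)) (n p : ℕ) :
    ncCount n p (onePat s) =
    {w | ∃ L : List (List ℕ), L.length = p ∧ (∀ c ∈ L, Cn (onePat s) c) ∧ w = join L ∧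
      w.length = n}.ncard := by
  unfold ncCount
  congr 1
  ext w
  constructor
  · rintro ⟨h1, h2, h3, h4, L, h5, h6, rfl⟩
    have hX : ∀ c ∈ L, X c := fun c hc => ⟨(isRGF_iff c).1 (h6 c hc).1, fun hcon =>
      h2 (join_contains_of_mem hc hcon)⟩
    refine ⟨L, h5, fun c hc => ⟨⟨hX c hc, fun hcon => h4 (join_contains_of_mem hc hcon)⟩,
      (h6 c hc).2⟩, rfl, h3⟩
  · rintro ⟨L, h1, hL, rfl, h3⟩
    have hX := X_join (fun c hc => (hL c hc).1.1)
    refine ⟨(isRGF_iff _).2 hX.1, hX.2, h3, ?_, L, h1,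
      fun c hc => ⟨(isRGF_iff c).2 (hL c hc).1.1.1, (hL c hc).2⟩, rfl⟩
    exact (join_mem_iff (fun c hc => (hL c hc).1.1)).2 fun c hc => (hL c hc).1.2

theorem Mt_map (g : List ℕ → List ℕ) (cs : List (List ℕ)) : ∀ L : List (List ℕ),
    (∀ c ∈ cs, ∀ w ∈ L, g w = w ∨ (PatContains w c ∧ PatContains (g w) c)) →
    (Mt cs L ↔ Mt cs (L.map g)) := by
  have hK : ∀ (c : List ℕ) (L : List (List ℕ)),
      (∀ w ∈ L, g w = w ∨ (PatContains w c ∧ PatContains (g w) c)) → (K c L ↔ K c (L.map g)) := by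
    intro c L h
    by_cases hall : ∀ w ∈ L, g w = w
    · rw [List.map_congr_left hall]; simp
    · push Not at hall
      obtain ⟨w, hw, hne⟩ := hall
      have hne' : L ≠ [] := by rintro rfl; simp at hw
      rcases h w hw with h | ⟨h1, h2⟩
      · exact absurd h hne
      · exact iff_of_true ⟨hne', join_contains_of_mem hw h1⟩
          ⟨by simpa using hne', join_contains_of_mem (List.mem_map_of_mem hw) h2⟩
  induction cs with
  | nil => intro L _; exact Iff.rfl
  | cons c cs ih =>
    intro L h
    constructor
    · rintro ⟨l1, l2, rfl, h1, h2⟩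
      refine ⟨l1.map g, l2.map g, by simp, (hK c l1 fun w hw => h c (by simp) w (by simp [hw])).1 h1,
        (ih l2 fun d hd w hw => h d (by simp [hd]) w (by simp [hw])).1 h2⟩
    · rintro ⟨l1', l2', he, h1, h2⟩
      obtain ⟨l1, l2, rfl, rfl, rfl⟩ := List.map_eq_append_iff.1 he
      exact ⟨l1, l2, rfl, (hK c l1 fun w hw => h c (by simp) w (by simp [hw])).2 h1,
        (ih l2 fun d hd w hw => h d (by simp [hd]) w (by simp [hw])).2 h2⟩

theorem onePat_contains_mem {s : List (List ℕ)} (hs : Pos s) {c : List ℕ} (hc : c ∈ s) :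
    PatContains (onePat s) c := by
  have hself : PatContains c c := (contains_iff _ _).2 ⟨id, fun _ _ _ _ h => h, by simp⟩
  refine contains_mono (join_sub_onePat hs) ?_
  rw [contains_shift]
  exact join_contains_of_mem hc hself

theorem Cn_eq (s : List (List ℕ)) (hs : Pos s) (n : ℕ) :
    {w | Cn (onePat s) w ∧ w.length = n}.ncard =
    {L : List (List ℕ) | (∀ c ∈ L, c ∈ {w | Av (onePat s) w ∧ w.length < n}) ∧
      (¬ Mt s L ∧ 1 + L.length + (L.map List.length).sum = n)}.ncard := by
  symm
  apply ncard_of_bijOn (f := onePat)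
  refine ⟨?_, ?_, ?_⟩
  · rintro L ⟨h1, h2, h3⟩
    have hX : ∀ c ∈ L, X c := fun c hc => (h1 c hc).1.1
    refine ⟨⟨⟨X_onePat hX, ?_⟩, onePat_connected L⟩, by rw [onePat, length_onePatAux, h3]⟩
    rw [onePat_contains_iff (X.pos hX) hs]
    rintro (⟨c, hc, h⟩ | h)
    · exact (h1 c hc).1.2 h
    · exact h2 h
  · rintro L ⟨h1, -⟩ L' ⟨h1', -⟩ he
    exact onePat_inj (X.pos fun c hc => (h1 c hc).1.1) (X.pos fun c hc => (h1' c hc).1.1) he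
  · rintro w ⟨⟨⟨h1, h2⟩, h3⟩, h4⟩
    obtain ⟨L, hL, rfl⟩ := X_connected h1 h3
    rw [onePat_contains_iff (X.pos hL) hs] at h2
    push Not at h2
    rw [onePat, length_onePatAux] at h4
    refine ⟨L, ⟨fun c hc => ⟨⟨hL c hc, h2.1 c hc⟩, ?_⟩, h2.2, h4⟩, rfl⟩
    have := le_sum_length hc
    omega

/-- The inductive step: counts of connected avoiders. -/
theorem step (s s' : List (List ℕ)) (hs : Pos s) (hperm : s.Perm s')
    (hE : E X (Mt s) (Mt s')) (n : ℕ)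
    (h : ∀ m < n, {w | Av (onePat s) w ∧ w.length = m}.ncard =
      {w | Av (onePat s') w ∧ w.length = m}.ncard) :
    {w | Cn (onePat s) w ∧ w.length = n}.ncard = {w | Cn (onePat s') w ∧ w.length = n}.ncard := by
  classical
  have hs' : Pos s' := fun c hc => hs c (hperm.mem_iff.2 hc)
  let D1 : List ℕ → Prop := fun w => Av (onePat s) w ∧ PatContains w (onePat s')
  let D2 : List ℕ → Prop := fun w => Av (onePat s') w ∧ PatContains w (onePat s)
  have hfin : ∀ (t : List (List ℕ)) m, {w | Av (onePat t) w ∧ w.length = m}.Finite := fun t m =>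
    X_finite _ (fun w hw => hw.1) m
  have hD : ∀ m < n, {w | D1 w ∧ w.length = m}.ncard = {w | D2 w ∧ w.length = m}.ncard := by
    intro m hm
    have e1 : {w | D1 w ∧ w.length = m} =
        {w | Av (onePat s) w ∧ w.length = m} \ {w | Av (onePat s') w ∧ w.length = m} := by
      ext w
      simp only [D1, Av, Set.mem_setOf_eq, Set.mem_diff]
      tauto
    have e2 : {w | D2 w ∧ w.length = m} =
        {w | Av (onePat s') w ∧ w.length = m} \ {w | Av (onePat s) w ∧ w.length = m} := by
      ext w
      simp only [D2, Av, Set.mem_setOf_eq, Set.mem_diff]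
      tauto
    rw [e1, e2]
    have a1 := Set.ncard_inter_add_ncard_sdiff_eq_ncard {w | Av (onePat s) w ∧ w.length = m}
      {w | Av (onePat s') w ∧ w.length = m} (hfin s m)
    have a2 := Set.ncard_inter_add_ncard_sdiff_eq_ncard {w | Av (onePat s') w ∧ w.length = m}
      {w | Av (onePat s) w ∧ w.length = m} (hfin s' m)
    rw [Set.inter_comm] at a2
    have := h m hm
    omega
  obtain ⟨φ, hφ, hlen⟩ := bij_of_counts D1 D2 (fun w hw => hw.1.1) (fun w hw => hw.1.1) n hD
  let g : List ℕ → List ℕ := fun w => if D1 w ∧ w.length < n then φ w else w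
  have g1 : ∀ w, D1 w → w.length < n → g w = φ w := fun w h1 h2 => if_pos ⟨h1, h2⟩
  have g2 : ∀ w, ¬ D1 w → g w = w := fun w h1 => if_neg (fun h => h1 h.1)
  have hg : Set.BijOn g {w | Av (onePat s) w ∧ w.length < n} {w | Av (onePat s') w ∧ w.length < n} := by
    refine ⟨?_, ?_, ?_⟩
    · rintro w ⟨hw, hn⟩
      by_cases hd : D1 w
      · rw [g1 w hd hn]
        have := hφ.mapsTo ⟨hd, hn⟩
        exact ⟨this.1.1, this.2⟩
      · rw [g2 w hd]
        exact ⟨⟨hw.1, fun hc => hd ⟨hw, hc⟩⟩, hn⟩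
    · rintro w ⟨hw, hn⟩ w' ⟨hw', hn'⟩ he
      by_cases hd : D1 w <;> by_cases hd' : D1 w'
      · rw [g1 w hd hn, g1 w' hd' hn'] at he
        exact hφ.injOn ⟨hd, hn⟩ ⟨hd', hn'⟩ he
      · rw [g1 w hd hn, g2 w' hd'] at he
        have := (hφ.mapsTo ⟨hd, hn⟩).1.2
        rw [he] at this
        exact absurd this hw'.2
      · rw [g2 w hd, g1 w' hd' hn'] at he
        have := (hφ.mapsTo ⟨hd', hn'⟩).1.2
        rw [← he] at this
        exact absurd this hw.2
      · rwa [g2 w hd, g2 w' hd'] at he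
    · rintro y ⟨hy, hn⟩
      by_cases hc : PatContains y (onePat s)
      · obtain ⟨w, ⟨hw, hn'⟩, rfl⟩ := hφ.surjOn (show y ∈ {w | D2 w ∧ w.length < n} from ⟨⟨hy, hc⟩, hn⟩)
        exact ⟨w, ⟨hw.1, hn'⟩, g1 w hw hn'⟩
      · exact ⟨y, ⟨⟨hy.1, hc⟩, hn⟩, g2 y (fun hd => hy.2 hd.2)⟩
  have hglen : ∀ w, w.length < n → (g w).length = w.length := by
    intro w hn
    by_cases hd : D1 w
    · rw [g1 w hd hn, hlen w hd hn]
    · rw [g2 w hd]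
  rw [Cn_eq s hs, Cn_eq s' hs']
  have b1 := ncard_of_bijOn (map_bijOn g _ _
    (fun L => ¬ Mt s L ∧ 1 + L.length + (L.map List.length).sum = n)
    (fun L => ¬ Mt s L ∧ 1 + L.length + (L.map List.length).sum = n) hg (by
      intro L hL
      rw [map_lengths (fun c hc => hglen c (hL c hc).2), List.length_map, Mt_map g s L]
      intro c hc w hw
      obtain ⟨hw1, hw2⟩ := hL w hw
      by_cases hd : D1 w
      · right
        rw [g1 w hd hw2]
        refine ⟨contains_trans hd.2 (onePat_contains_mem hs' (hperm.mem_iff.1 hc)),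
          contains_trans (hφ.mapsTo ⟨hd, hw2⟩).1.2 (onePat_contains_mem hs hc)⟩
      · exact Or.inl (g2 w hd)))
  rw [b1]
  obtain ⟨F, hF, hFM⟩ := hE
  apply ncard_of_bijOn (f := F)
  have hmem : ∀ L, ∀ c, c ∈ F L ↔ c ∈ L := fun L c => (hF L).mem_iff
  have hiff : ∀ L, (F L ∈ {L : List (List ℕ) | (∀ c ∈ L, c ∈ {w | Av (onePat s') w ∧ w.length < n}) ∧
      (¬ Mt s' L ∧ 1 + L.length + (L.map List.length).sum = n)}) ↔
      (L ∈ {L : List (List ℕ) | (∀ c ∈ L, c ∈ {w | Av (onePat s') w ∧ w.length < n}) ∧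
      (¬ Mt s L ∧ 1 + L.length + (L.map List.length).sum = n)}) := by
    intro L
    simp only [Set.mem_setOf_eq, hmem, (hF L).length_eq, ((hF L).map List.length).sum_eq]
    constructor
    · rintro ⟨h1, h2, h3⟩
      exact ⟨h1, fun hc => h2 ((hFM L (fun c hc => (h1 c hc).1.1)).1 hc), h3⟩
    · rintro ⟨h1, h2, h3⟩
      exact ⟨h1, fun hc => h2 ((hFM L (fun c hc => (h1 c hc).1.1)).2 hc), h3⟩
  refine ⟨fun L hL => (hiff L).2 hL, F.injective.injOn, fun L hL => ?_⟩
  refine ⟨F.symm L, (hiff _).1 (by simpa using hL), by simp⟩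

theorem Cn_count (s s' : List (List ℕ)) (hs : Pos s) (hperm : s.Perm s')
    (hE : E X (Mt s) (Mt s')) (n : ℕ) :
    {w | Cn (onePat s) w ∧ w.length = n}.ncard = {w | Cn (onePat s') w ∧ w.length = n}.ncard := by
  induction n using Nat.strong_induction_on with
  | _ n ih =>
    apply step s s' hs hperm hE n
    intro m hm
    rw [Av_eq, Av_eq]
    exact join_count _ _ (fun w hw => ⟨hw.1.1, hw.2⟩) (fun w hw => ⟨hw.1.1, hw.2⟩) n ih
      (fun _ => True) m hm

end S9

/-- Theorem 3.5: in `1[σ₁]1⋯1[σ_k]1`, swapping adjacent factors `σ_q, σ_{q+1}`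
yields a cc-equivalent pattern, provided `σ_q` is empty, connected, or has all
letters distinct. -/
theorem stmt9 (pre post : List (List ℕ)) (a b : List ℕ)
    (hall : ∀ c ∈ pre ++ [a, b] ++ post, IsRGF c ∧ NonCrossing c)
    (hq : a = [] ∨ Connected a ∨ a.Nodup) :
    ccEquiv (onePat (pre ++ [a, b] ++ post)) (onePat (pre ++ [b, a] ++ post)) := by
  have hs : S9.Pos (pre ++ [a, b] ++ post) := fun c hc => (hall c hc).1.1
  have hperm : (pre ++ [a, b] ++ post).Perm (pre ++ [b, a] ++ post) :=
    (List.Perm.append_left pre (List.Perm.swap b a [])).append_right post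
  have hE := S9.E_main pre post a b ((S9.isRGF_iff a).1 (hall a (by simp)).1) hq
  intro n p
  rw [S9.nc_eq, S9.nc_eq]
  exact S9.join_count _ _ (fun w hw => ⟨hw.1.1, hw.2⟩) (fun w hw => ⟨hw.1.1, hw.2⟩) (n + 1)
    (fun m _ => S9.Cn_count _ _ hs hperm hE m) (fun k => k = p) n (by omega)
end
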